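/- arXiv:1810.10695 — 8 statements merged into one kernel-verified Lean document; each statement's English description precedes it below -/
import Mathlib

section
/- Suppose the set I of eigen-indices contains exactly K indices whose eigenvectors at t=0 are supported on C, each associated with a unique cluster C_j and satisfying (1−ε1)/ν(C_j,0) ≤ ψ(x)² ≤ (1+ε1)/ν(C_j,0) for x∈C_j and ψ(x)² ≤ ε1/ν(C,0) for x∈C∖C_j (0 ≤ ε1 < 1), and |I|−K indices whose eigenvectors are supported on B and satisfy ψ(x)² ≤ (1+ε2)/ν(B,0) for x∈B (ε2 ≥ 0). Suppose further that (#) := d0_low·(1−ε1)/d0_up − (δ/(1−δ))·((|I|−K)/K)·(1+ε2) > 0. Then: (1) for every x∈C and y∈B, S(x,0) − S(y,0) ≥ g0 := (1/(n·d0_low))·(K/δ)·(#) > 0; and (2) sup_{x∈V} S(x,0) ≤ (1/(n·d0_low))·(K/δ)·(1+2ε1). -/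
open Finset

/-- A sum over `I` splits into the sum over an injectively indexed part and the remainder. -/
theorem sum_eq_sum_injective_add_sum_sdiff {ι V : Type*} [Fintype ι] [DecidableEq V]
    {σ : ι → V} (hσ : Function.Injective σ) {I : Finset V} (hσI : ∀ j, σ j ∈ I) (f : V → ℝ) :
    ∑ k ∈ I, f k = ∑ j, f (σ j) + ∑ k ∈ I \ univ.image σ, f k := by
  have hsub : univ.image σ ⊆ I := by
    intro k hk
    obtain ⟨j, -, rfl⟩ := mem_image.mp hk
    exact hσI j
  rw [← sum_sdiff hsub, sum_image hσ.injOn, add_comm]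

/-- Initial separation of `C` from `B` by the spectral embedding norm
`S(x,0) = ∑_{k∈I} ψ_k(x)²`. Under Assumption A1 (eigenvector structure at `t = 0`) and
Assumption A2 (`(#) > 0`), (1) `S(x,0) - S(y,0) ≥ g0 = (1/(n d0low))(K/δ)(#) > 0` for all
`x ∈ C`, `y ∈ B`, and (2) `sup_x S(x,0) ≤ (1/(n d0low))(K/δ)(1+2ε1)`. -/
theorem embedding_norm_initial_separation
    {V : Type*} [Fintype V] [DecidableEq V] [Nonempty V]
    (B C : Finset V) (hdisj : Disjoint B C) (hunion : B ∪ C = Finset.univ)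
    (hBne : B.Nonempty) (hCne : C.Nonempty)
    (K : ℕ) (hK : 0 < K) (Cl : Fin K → Finset V)
    (hClsub : ∀ j, Cl j ⊆ C)
    (hCldisj : ∀ j j', j ≠ j' → Disjoint (Cl j) (Cl j'))
    (hClcover : ∀ x ∈ C, ∃ j, x ∈ Cl j)
    (δ : ℝ) (hδ0 : 0 < δ) (hδ1 : δ < 1)
    (hCcard : (C.card : ℝ) = δ * Fintype.card V)
    (hClcard : ∀ j, ((Cl j).card : ℝ) = δ * Fintype.card V / K)
    (W0 : Matrix V V ℝ) (hW0symm : W0.IsSymm)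
    (hW0nonneg : ∀ x y, 0 ≤ W0 x y)
    (hW0cross : ∀ x y, ((x ∈ B ∧ y ∈ C) ∨ (x ∈ C ∧ y ∈ B)) → W0 x y = 0)
    (d : V → ℝ) (hd : ∀ x, d x = ∑ y, W0 x y)
    (d0low d0up : ℝ)
    (hd0low : d0low = Finset.univ.inf' Finset.univ_nonempty d)
    (hd0up : d0up = Finset.univ.sup' Finset.univ_nonempty d)
    (hd0pos : 0 < d0low)
    -- eigendata of P(0) = D(0)⁻¹ W0, indexed by k : V, D(0)-orthonormal
    (lam : V → ℝ) (ψ : V → V → ℝ)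
    (heig : ∀ k x, ∑ y, W0 x y * ψ k y = lam k * (d x * ψ k x))
    (horth : ∀ k l, ∑ x, ψ k x * d x * ψ l x = if k = l then 1 else 0)
    (I : Finset V)
    (ε1 ε2 : ℝ) (hε1 : 0 ≤ ε1) (hε1' : ε1 < 1) (hε2 : 0 ≤ ε2)
    -- Assumption A1: K eigenvectors in I supported on C, one per cluster
    (σ : Fin K → V) (hσinj : Function.Injective σ)
    (hσI : ∀ j, σ j ∈ I)
    (hCsupp : ∀ j, ∀ x ∈ B, ψ (σ j) x = 0)
    (hBsupp : ∀ k ∈ I, k ∉ Finset.univ.image σ → ∀ x ∈ C, ψ k x = 0)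
    (hlow : ∀ j, ∀ x ∈ Cl j, (1 - ε1) / (∑ y ∈ Cl j, d y) ≤ (ψ (σ j) x) ^ 2)
    (hup : ∀ j, ∀ x ∈ Cl j, (ψ (σ j) x) ^ 2 ≤ (1 + ε1) / (∑ y ∈ Cl j, d y))
    (hoff : ∀ j, ∀ x ∈ C, x ∉ Cl j → (ψ (σ j) x) ^ 2 ≤ ε1 / (∑ y ∈ C, d y))
    (hBbound : ∀ k ∈ I, k ∉ Finset.univ.image σ →
      ∀ x ∈ B, (ψ k x) ^ 2 ≤ (1 + ε2) / (∑ y ∈ B, d y))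
    -- Assumption A2: (#) > 0
    (hash : ℝ)
    (hhash : hash = d0low * (1 - ε1) / d0up
      - (δ / (1 - δ)) * (((I.card : ℝ) - K) / K) * (1 + ε2))
    (hA2 : 0 < hash) :
    0 < (1 / (Fintype.card V * d0low)) * (K / δ) * hash ∧
    (∀ x ∈ C, ∀ y ∈ B,
        (1 / (Fintype.card V * d0low)) * (K / δ) * hash
          ≤ (∑ k ∈ I, (ψ k x) ^ 2) - ∑ k ∈ I, (ψ k y) ^ 2) ∧
    (∀ x : V, ∑ k ∈ I, (ψ k x) ^ 2 ≤ (1 / (Fintype.card V * d0low)) * (K / δ) * (1 + 2 * ε1)) := by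
  set n : ℝ := (Fintype.card V : ℝ) with hn
  have hn0 : 0 < n := by
    rw [hn]
    exact_mod_cast Fintype.card_pos
  have hK0 : (0 : ℝ) < K := by exact_mod_cast hK
  have h1δ : 0 < 1 - δ := sub_pos.mpr hδ1
  have hdlow : ∀ x, d0low ≤ d x := fun x => hd0low ▸ inf'_le d (mem_univ x)
  have hdup : ∀ x, d x ≤ d0up := fun x => hd0up ▸ le_sup' d (mem_univ x)
  have hlowup : d0low ≤ d0up := by
    obtain ⟨x⟩ := ‹Nonempty V›
    exact (hdlow x).trans (hdup x)
  have hup0 : 0 < d0up := hd0pos.trans_le hlowup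
  have hνlow : ∀ s : Finset V, (s.card : ℝ) * d0low ≤ ∑ y ∈ s, d y := fun s => by
    simpa using card_nsmul_le_sum s d d0low fun x _ => hdlow x
  have hνup : ∀ s : Finset V, ∑ y ∈ s, d y ≤ (s.card : ℝ) * d0up := fun s => by
    simpa using sum_le_card_nsmul s d d0up fun x _ => hdup x
  have hBcard : (B.card : ℝ) = (1 - δ) * n := by
    have h := card_union_of_disjoint hdisj
    rw [hunion, card_univ] at h
    have h' : n = (B.card : ℝ) + C.card := by
      rw [hn]
      exact_mod_cast h
    linarith
  have hνB : (1 - δ) * n * d0low ≤ ∑ y ∈ B, d y := hBcard ▸ hνlow B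
  have hνC : δ * n * d0low ≤ ∑ y ∈ C, d y := hCcard ▸ hνlow C
  have hνCl : ∀ j, δ * n / K * d0low ≤ ∑ y ∈ Cl j, d y := fun j => hClcard j ▸ hνlow (Cl j)
  have hνCl' : ∀ j, ∑ y ∈ Cl j, d y ≤ δ * n / K * d0up := fun j => hClcard j ▸ hνup (Cl j)
  have hSC : ∀ x ∈ C, ∑ k ∈ I, ψ k x ^ 2 = ∑ j, ψ (σ j) x ^ 2 := by
    intro x hx
    rw [sum_eq_sum_injective_add_sum_sdiff hσinj hσI, add_eq_left]
    refine sum_eq_zero fun k hk => ?_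
    rw [mem_sdiff] at hk
    simp [hBsupp k hk.1 hk.2 x hx]
  have hSClow : ∀ x ∈ C, (1 - ε1) / (δ * n / K * d0up) ≤ ∑ k ∈ I, ψ k x ^ 2 := by
    intro x hx
    obtain ⟨j, hj⟩ := hClcover x hx
    have hpos : 0 < ∑ y ∈ Cl j, d y := lt_of_lt_of_le (by positivity) (hνCl j)
    calc (1 - ε1) / (δ * n / K * d0up)
        ≤ (1 - ε1) / ∑ y ∈ Cl j, d y :=
          div_le_div_of_nonneg_left (sub_nonneg.mpr hε1'.le) hpos (hνCl' j)
      _ ≤ ψ (σ j) x ^ 2 := hlow j x hj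
      _ ≤ ∑ j, ψ (σ j) x ^ 2 :=
          single_le_sum (f := fun j => ψ (σ j) x ^ 2) (fun _ _ => sq_nonneg _) (mem_univ j)
      _ = ∑ k ∈ I, ψ k x ^ 2 := (hSC x hx).symm
  have hSCup : ∀ x ∈ C, ∑ k ∈ I, ψ k x ^ 2 ≤
      (1 + ε1) / (δ * n / K * d0low) + K * (ε1 / (δ * n * d0low)) := by
    intro x hx
    obtain ⟨j, hj⟩ := hClcover x hx
    rw [hSC x hx, ← add_sum_erase univ (fun j => ψ (σ j) x ^ 2) (mem_univ j)]
    have hin : ψ (σ j) x ^ 2 ≤ (1 + ε1) / (δ * n / K * d0low) :=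
      (hup j x hj).trans (div_le_div_of_nonneg_left (by positivity) (by positivity) (hνCl j))
    have hout : ∑ i ∈ univ.erase j, ψ (σ i) x ^ 2 ≤ K * (ε1 / (δ * n * d0low)) := by
      have hterm : ∀ i ∈ univ.erase j, ψ (σ i) x ^ 2 ≤ ε1 / (δ * n * d0low) := by
        intro i hi
        have hxi : x ∉ Cl i := disjoint_left.mp (hCldisj j i (ne_of_mem_erase hi).symm) hj
        exact (hoff i x hx hxi).trans
          (div_le_div_of_nonneg_left hε1 (by positivity) hνC)
      calc ∑ i ∈ univ.erase j, ψ (σ i) x ^ 2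
          ≤ ((univ.erase j).card : ℝ) * (ε1 / (δ * n * d0low)) := by
            simpa only [nsmul_eq_mul] using sum_le_card_nsmul _ _ _ hterm
        _ ≤ K * (ε1 / (δ * n * d0low)) := by
            gcongr
            simp
    exact add_le_add hin hout
  have hIcard : ((I \ univ.image σ).card : ℝ) = (I.card : ℝ) - K := by
    have h := sum_eq_sum_injective_add_sum_sdiff hσinj hσI fun _ => (1 : ℝ)
    simp only [sum_const, nsmul_eq_mul, mul_one, card_univ, Fintype.card_fin] at h
    linarith
  have hSB : ∀ y ∈ B, ∑ k ∈ I, ψ k y ^ 2 ≤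
      ((I.card : ℝ) - K) * ((1 + ε2) / ((1 - δ) * n * d0low)) := by
    intro y hy
    have hzero : ∑ j, ψ (σ j) y ^ 2 = 0 := sum_eq_zero fun j _ => by simp [hCsupp j y hy]
    rw [sum_eq_sum_injective_add_sum_sdiff hσinj hσI, hzero, zero_add, ← hIcard, ← nsmul_eq_mul]
    refine sum_le_card_nsmul _ _ _ fun k hk => ?_
    rw [mem_sdiff] at hk
    exact (hBbound k hk.1 hk.2 y hy).trans
      (div_le_div_of_nonneg_left (by positivity) (by positivity) hνB)
  have hgap : 1 / (n * d0low) * (K / δ) * hash = (1 - ε1) / (δ * n / K * d0up) -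
      ((I.card : ℝ) - K) * ((1 + ε2) / ((1 - δ) * n * d0low)) := by
    rw [hhash]
    field_simp
  have hgap0 : 0 < 1 / (n * d0low) * (K / δ) * hash := by positivity
  refine ⟨hgap0, fun x hx y hy => ?_, fun x => ?_⟩
  · linarith [hSClow x hx, hSB y hy]
  · rcases mem_union.mp (hunion ▸ mem_univ x) with hx | hx
    · have hratio : (1 - ε1) / (δ * n / K * d0up) ≤
          1 / (n * d0low) * (K / δ) * (1 + 2 * ε1) := by
        calc (1 - ε1) / (δ * n / K * d0up)
            ≤ (1 + 2 * ε1) / (δ * n / K * d0low) := by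
              gcongr
              linarith
          _ = 1 / (n * d0low) * (K / δ) * (1 + 2 * ε1) := by field_simp
      linarith [hSB x hx]
    · refine (hSCup x hx).trans_eq ?_
      field_simp
      ring
end

section
/- Let W, D : ℝ → (n×n real matrices) be differentiable at t, with W(s) and D(s) symmetric for s near t, and let λ : ℝ → ℝ and ψ : ℝ → ℝⁿ be differentiable at t and satisfy, for s near t, the generalized eigen-equation W(s)ψ(s) = λ(s)D(s)ψ(s) and the normalization ψ(s)ᵀD(s)ψ(s) = 1. Then the Hadamard variation formula holds: λ'(t) = ψ(t)ᵀ(W'(t) − λ(t)D'(t))ψ(t). -/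
open Matrix

/-- Product rule for the matrix-vector product, in coordinates. -/
theorem hasDerivAt_mulVec_apply {m n : Type*} [Fintype n]
    {A : ℝ → Matrix m n ℝ} {A' : Matrix m n ℝ} {v : ℝ → n → ℝ} {v' : n → ℝ} {t : ℝ}
    (hA : ∀ i j, HasDerivAt (fun s => A s i j) (A' i j) t)
    (hv : ∀ j, HasDerivAt (fun s => v s j) (v' j) t) (i : m) :
    HasDerivAt (fun s => (A s *ᵥ v s) i) ((A' *ᵥ v t + A t *ᵥ v') i) t := by
  simp only [Pi.add_apply, mulVec, dotProduct, ← Finset.sum_add_distrib]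
  exact HasDerivAt.fun_sum fun j _ => (hA i j).mul (hv j)

/-- A symmetric matrix is self-adjoint for the dot product. -/
theorem Matrix.IsSymm.dotProduct_mulVec_comm {n R : Type*} [Fintype n] [CommSemiring R]
    {A : Matrix n n R} (hA : A.IsSymm) (v w : n → R) : v ⬝ᵥ A *ᵥ w = A *ᵥ v ⬝ᵥ w := by
  rw [dotProduct_mulVec, ← mulVec_transpose, hA.eq]

/-- Hadamard variation formula for a generalized eigenvalue: if
`W(s)ψ(s) = λ(s)D(s)ψ(s)` and `ψ(s)ᵀD(s)ψ(s) = 1` for `s` near `t`, with everything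
differentiable at `t` and `W(s)`, `D(s)` symmetric near `t`, then
`λ'(t) = ψ(t)ᵀ(W'(t) − λ(t)D'(t))ψ(t)`. -/
theorem hadamard_eigenvalue_variation {n : ℕ}
    (W D : ℝ → Matrix (Fin n) (Fin n) ℝ)
    (W' D' : Matrix (Fin n) (Fin n) ℝ) (t : ℝ)
    (hW : ∀ i j, HasDerivAt (fun s => W s i j) (W' i j) t)
    (hD : ∀ i j, HasDerivAt (fun s => D s i j) (D' i j) t)
    (hWsymm : ∀ᶠ s in nhds t, (W s).IsSymm)
    (hDsymm : ∀ᶠ s in nhds t, (D s).IsSymm)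
    (lam : ℝ → ℝ) (lam' : ℝ) (hlam : HasDerivAt lam lam' t)
    (ψ : ℝ → Fin n → ℝ) (ψ' : Fin n → ℝ)
    (hψ : ∀ i, HasDerivAt (fun s => ψ s i) (ψ' i) t)
    (heig : ∀ᶠ s in nhds t, (W s).mulVec (ψ s) = lam s • (D s).mulVec (ψ s))
    (hnorm : ∀ᶠ s in nhds t, ψ s ⬝ᵥ (D s).mulVec (ψ s) = 1) :
    lam' = ψ t ⬝ᵥ (W' - lam t • D').mulVec (ψ t) := by
  have hderiv : W' *ᵥ ψ t + W t *ᵥ ψ' =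
      lam' • D t *ᵥ ψ t + lam t • (D' *ᵥ ψ t + D t *ᵥ ψ') := by
    ext i
    refine (hasDerivAt_mulVec_apply hW hψ i).unique
      ((hlam.mul (hasDerivAt_mulVec_apply hD hψ i)).congr_of_eventuallyEq ?_)
    filter_upwards [heig] with s hs using congrFun hs i
  have hpair := congrArg (ψ t ⬝ᵥ ·) hderiv
  simp only [dotProduct_add, dotProduct_smul, smul_eq_mul, hnorm.self_of_nhds,
    hWsymm.self_of_nhds.dotProduct_mulVec_comm _ ψ',
    hDsymm.self_of_nhds.dotProduct_mulVec_comm _ ψ', heig.self_of_nhds,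
    smul_dotProduct] at hpair
  simp only [sub_mulVec, smul_mulVec, dotProduct_sub, dotProduct_smul, smul_eq_mul]
  linarith
end

section
/- Suppose for each k = 1,…,n there are differentiable functions λ_k : [0,1] → ℝ and ψ_k : [0,1] → ℝ^V such that W(t)ψ_k(t) = λ_k(t)D(t)ψ_k(t), ψ_k(t)ᵀD(t)ψ_j(t) = δ_{kj} for all k,j, and |λ_k(t)| ≤ 1, for all t∈[0,1]. Then the eigenvalues deform stably: |λ_k(t) − λ_k(0)| ≤ (4·C_conn/d0_low)·t for every k and every t∈[0,1]. -/
open Finset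

/-- A derivative read off from a divided-difference identity with a normalizing factor. -/
lemma derivWithin_eq_of_sub_mul_eq {S : Set ℝ} {t : ℝ} (hS : UniqueDiffWithinAt ℝ S t) (ht : t ∈ S)
    {f N R : ℝ → ℝ} (hf : DifferentiableWithinAt ℝ f S t) (hN : DifferentiableWithinAt ℝ N S t)
    (hR : DifferentiableWithinAt ℝ R S t) (hNt : N t = 1)
    (h : ∀ s ∈ S, (f s - f t) * N s = (s - t) * R s) : derivWithin f S t = R t := by
  have h₁ := (hf.hasDerivWithinAt.sub_const (f t)).mul hN.hasDerivWithinAt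
  have h₂ := ((hasDerivWithinAt_id t S).sub_const t).mul hR.hasDerivWithinAt
  have h₃ := hS.eq_deriv _ h₁ (h₂.congr h (h t ht))
  simpa [hNt] using h₃

section QuadraticForms

variable {V : Type*} [Fintype V]

/-- The bilinear form `uᵀ W v`. -/
def weightForm (W : Matrix V V ℝ) (u v : V → ℝ) : ℝ := ∑ x, u x * ∑ y, W x y * v y

/-- The bilinear form `uᵀ D v`, where `D` is the diagonal matrix of row sums of `W`. -/
def degreeForm (W : Matrix V V ℝ) (u v : V → ℝ) : ℝ := ∑ x, u x * (∑ y, W x y) * v x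

lemma weightForm_comm {W : Matrix V V ℝ} (hW : W.IsSymm) (u v : V → ℝ) :
    weightForm W u v = weightForm W v u := by
  simp only [weightForm, Finset.mul_sum]
  rw [Finset.sum_comm]
  refine Finset.sum_congr rfl fun x _ => Finset.sum_congr rfl fun y _ => ?_
  rw [hW.apply]
  ring

lemma degreeForm_comm (W : Matrix V V ℝ) (u v : V → ℝ) :
    degreeForm W u v = degreeForm W v u :=
  Finset.sum_congr rfl fun x _ => by ring

lemma weightForm_add_smul (W E : Matrix V V ℝ) (t : ℝ) (u v : V → ℝ) :
    weightForm (fun x y => W x y + t * E x y) u v = weightForm W u v + t * weightForm E u v := by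
  simp only [weightForm, Finset.mul_sum, ← Finset.sum_add_distrib]
  exact Finset.sum_congr rfl fun x _ => Finset.sum_congr rfl fun y _ => by ring

lemma degreeForm_add_smul (W E : Matrix V V ℝ) (t : ℝ) (u v : V → ℝ) :
    degreeForm (fun x y => W x y + t * E x y) u v = degreeForm W u v + t * degreeForm E u v := by
  simp only [degreeForm, Finset.mul_sum, Finset.sum_mul, ← Finset.sum_add_distrib]
  exact Finset.sum_congr rfl fun x _ => Finset.sum_congr rfl fun y _ => by ring

lemma weightForm_eq_mul_degreeForm {W : Matrix V V ℝ} {v : V → ℝ} {μ : ℝ}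
    (h : ∀ x, ∑ y, W x y * v y = μ * ((∑ y, W x y) * v x)) (u : V → ℝ) :
    weightForm W u v = μ * degreeForm W u v := by
  simp only [weightForm, degreeForm, h, Finset.mul_sum (s := Finset.univ) (a := μ)]
  exact Finset.sum_congr rfl fun x _ => by ring

lemma abs_weightForm_self_le {E : Matrix V V ℝ} (hE : E.IsSymm) (hE₀ : ∀ x y, 0 ≤ E x y)
    (v : V → ℝ) : |weightForm E v v| ≤ degreeForm E v v := by
  have hdeg : degreeForm E v v = ∑ x, ∑ y, E x y * ((v x ^ 2 + v y ^ 2) / 2) := by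
    have h₁ : degreeForm E v v = ∑ x, ∑ y, E x y * v x ^ 2 := by
      simp only [degreeForm, Finset.mul_sum, Finset.sum_mul]
      exact Finset.sum_congr rfl fun x _ => Finset.sum_congr rfl fun y _ => by ring
    have h₂ : ∑ x, ∑ y, E x y * v x ^ 2 = ∑ x, ∑ y, E x y * v y ^ 2 := by
      rw [Finset.sum_comm]
      exact Finset.sum_congr rfl fun x _ => Finset.sum_congr rfl fun y _ => by rw [hE.apply]
    have h₃ : ∑ x, ∑ y, E x y * ((v x ^ 2 + v y ^ 2) / 2) =
        ((∑ x, ∑ y, E x y * v x ^ 2) + ∑ x, ∑ y, E x y * v y ^ 2) / 2 := by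
      simp only [← Finset.sum_add_distrib, Finset.sum_div]
      exact Finset.sum_congr rfl fun x _ => Finset.sum_congr rfl fun y _ => by ring
    rw [h₃, ← h₂, h₁]
    ring
  rw [hdeg, weightForm]
  refine (Finset.abs_sum_le_sum_abs _ _).trans (Finset.sum_le_sum fun x _ => ?_)
  rw [Finset.mul_sum]
  refine (Finset.abs_sum_le_sum_abs _ _).trans (Finset.sum_le_sum fun y _ => ?_)
  have h : |v x * v y| ≤ (v x ^ 2 + v y ^ 2) / 2 :=
    abs_le.2 ⟨by nlinarith [sq_nonneg (v x + v y)], by nlinarith [sq_nonneg (v x - v y)]⟩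
  calc |v x * (E x y * v y)| = E x y * |v x * v y| := by
        rw [show v x * (E x y * v y) = E x y * (v x * v y) by ring, abs_mul,
          abs_of_nonneg (hE₀ x y)]
    _ ≤ _ := mul_le_mul_of_nonneg_left h (hE₀ x y)

lemma degreeForm_self_le {W : Matrix V V ℝ} {v : V → ℝ} {c : ℝ} (h : ∀ x, ∑ y, W x y ≤ c) :
    degreeForm W v v ≤ c * ∑ x, v x ^ 2 := by
  rw [degreeForm, Finset.mul_sum]
  refine Finset.sum_le_sum fun x _ => ?_
  nlinarith [mul_le_mul_of_nonneg_right (h x) (sq_nonneg (v x))]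

lemma le_degreeForm_self {W : Matrix V V ℝ} {v : V → ℝ} {c : ℝ} (h : ∀ x, c ≤ ∑ y, W x y) :
    c * ∑ x, v x ^ 2 ≤ degreeForm W v v := by
  rw [degreeForm, Finset.mul_sum]
  refine Finset.sum_le_sum fun x _ => ?_
  nlinarith [mul_le_mul_of_nonneg_right (h x) (sq_nonneg (v x))]

/-- A row sum of a cross-supported weight is at most the total cross weight. -/
lemma sum_row_le_sum_cross [DecidableEq V] {B C : Finset V} (hdisj : Disjoint B C)
    (hunion : B ∪ C = Finset.univ) {E : Matrix V V ℝ} (hE : E.IsSymm) (hE₀ : ∀ x y, 0 ≤ E x y)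
    (hcross : ∀ x y, ¬((x ∈ B ∧ y ∈ C) ∨ (x ∈ C ∧ y ∈ B)) → E x y = 0) (x : V) :
    ∑ y, E x y ≤ ∑ x ∈ B, ∑ y ∈ C, E x y := by
  have hx : x ∈ B ∪ C := hunion ▸ Finset.mem_univ x
  have hnot : ∀ z, z ∈ B → z ∉ C := fun _ hz => Finset.disjoint_left.1 hdisj hz
  rcases Finset.mem_union.1 hx with hB | hC
  · have h : ∑ y, E x y = ∑ y ∈ C, E x y :=
      (Finset.sum_subset (Finset.subset_univ C) fun y _ hy => hcross x y (by grind)).symm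
    rw [h]
    exact Finset.single_le_sum (f := fun x => ∑ y ∈ C, E x y)
      (fun z _ => Finset.sum_nonneg fun y _ => hE₀ z y) hB
  · have h : ∑ y, E x y = ∑ y ∈ B, E x y :=
      (Finset.sum_subset (Finset.subset_univ B) fun y _ hy => hcross x y (by grind)).symm
    rw [h]
    refine Finset.sum_le_sum fun y _ => ?_
    rw [← hE.apply]
    exact Finset.single_le_sum (f := fun z => E y z) (fun z _ => hE₀ y z) hC

end QuadraticForms

/-- Stable deformation of the eigenvalues of `P(t) = D(t)⁻¹W(t)`,
`W(t) = W0 + tE`: if for each `k` there are differentiable `λ_k`, `ψ_k` on `[0,1]` with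
`W(t)ψ_k(t) = λ_k(t)D(t)ψ_k(t)`, `D(t)`-orthonormality, and `|λ_k(t)| ≤ 1`, then
`|λ_k(t) − λ_k(0)| ≤ (4 C_conn/d0low)·t` for every `k` and `t ∈ [0,1]`. -/
theorem eigenvalue_stable_deformation
    {V : Type*} [Fintype V] [DecidableEq V] [Nonempty V]
    (B C : Finset V) (hdisj : Disjoint B C) (hunion : B ∪ C = Finset.univ)
    (hBne : B.Nonempty) (hCne : C.Nonempty)
    (W0 E : Matrix V V ℝ)
    (hW0symm : W0.IsSymm) (hW0nonneg : ∀ x y, 0 ≤ W0 x y)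
    (hW0cross : ∀ x y, ((x ∈ B ∧ y ∈ C) ∨ (x ∈ C ∧ y ∈ B)) → W0 x y = 0)
    (hEsymm : E.IsSymm) (hEnonneg : ∀ x y, 0 ≤ E x y)
    (hEcross : ∀ x y, ¬((x ∈ B ∧ y ∈ C) ∨ (x ∈ C ∧ y ∈ B)) → E x y = 0)
    (Cconn : ℝ) (hCconn : Cconn = ∑ x ∈ B, ∑ y ∈ C, E x y)
    (d0low : ℝ)
    (hd0low : d0low = Finset.univ.inf' Finset.univ_nonempty (fun x => ∑ y, W0 x y))
    (hd0pos : 0 < d0low)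
    (lam : V → ℝ → ℝ) (ψ : V → ℝ → V → ℝ)
    (hlamdiff : ∀ k, DifferentiableOn ℝ (lam k) (Set.Icc (0 : ℝ) 1))
    (hψdiff : ∀ k x, DifferentiableOn ℝ (fun s => ψ k s x) (Set.Icc (0 : ℝ) 1))
    (heig : ∀ k, ∀ t ∈ Set.Icc (0 : ℝ) 1, ∀ x,
      ∑ y, (W0 x y + t * E x y) * ψ k t y
        = lam k t * ((∑ y, (W0 x y + t * E x y)) * ψ k t x))
    (horth : ∀ t ∈ Set.Icc (0 : ℝ) 1, ∀ k l,
      ∑ x, ψ k t x * (∑ y, (W0 x y + t * E x y)) * ψ l t x = if k = l then 1 else 0)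
    (hlambound : ∀ k, ∀ t ∈ Set.Icc (0 : ℝ) 1, |lam k t| ≤ 1) :
    ∀ k, ∀ t ∈ Set.Icc (0 : ℝ) 1, |lam k t - lam k 0| ≤ (4 * Cconn / d0low) * t := by
  intro k t ht
  have hdeg₀ : ∀ x, d0low ≤ ∑ y, W0 x y := fun x =>
    hd0low ▸ Finset.inf'_le (fun x => ∑ y, W0 x y) (Finset.mem_univ x)
  have hdegE : ∀ x, ∑ y, E x y ≤ Cconn := fun x =>
    hCconn ▸ sum_row_le_sum_cross hdisj hunion hEsymm hEnonneg hEcross x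
  have hC₀ : 0 ≤ Cconn :=
    hCconn ▸ Finset.sum_nonneg fun x _ => Finset.sum_nonneg fun y _ => hEnonneg x y
  have heig' : ∀ s ∈ Set.Icc (0 : ℝ) 1, ∀ u, weightForm W0 u (ψ k s) + s * weightForm E u (ψ k s) =
      lam k s * (degreeForm W0 u (ψ k s) + s * degreeForm E u (ψ k s)) := fun s hs u => by
    rw [← weightForm_add_smul, ← degreeForm_add_smul]
    exact weightForm_eq_mul_degreeForm (heig k s hs) u
  have hnorm : ∀ s ∈ Set.Icc (0 : ℝ) 1,
      degreeForm W0 (ψ k s) (ψ k s) + s * degreeForm E (ψ k s) (ψ k s) = 1 := fun s hs => by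
    rw [← degreeForm_add_smul]
    simpa [degreeForm] using horth s hs k k
  have hderiv : ∀ s ∈ Set.Icc (0 : ℝ) 1, derivWithin (lam k) (Set.Icc 0 1) s =
      weightForm E (ψ k s) (ψ k s) - lam k s * degreeForm E (ψ k s) (ψ k s) := fun s hs => by
    have hψ : ∀ x, DifferentiableWithinAt ℝ (fun r => ψ k r x) (Set.Icc 0 1) s :=
      fun x => hψdiff k x s hs
    have hlam := hlamdiff k s hs
    have hdegdiff : ∀ W : Matrix V V ℝ,
        DifferentiableWithinAt ℝ (fun r => degreeForm W (ψ k r) (ψ k s)) (Set.Icc 0 1) s :=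
      fun W => DifferentiableWithinAt.fun_sum fun x _ => ((hψ x).mul_const _).mul_const _
    have hwdiff :
        DifferentiableWithinAt ℝ (fun r => weightForm E (ψ k r) (ψ k s)) (Set.Icc 0 1) s :=
      DifferentiableWithinAt.fun_sum fun x _ => (hψ x).mul_const _
    refine derivWithin_eq_of_sub_mul_eq (uniqueDiffOn_Icc zero_lt_one s hs) hs hlam
      (N := fun r => degreeForm W0 (ψ k r) (ψ k s) + s * degreeForm E (ψ k r) (ψ k s))
      (R := fun r => weightForm E (ψ k r) (ψ k s) - lam k r * degreeForm E (ψ k r) (ψ k s))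
      ((hdegdiff W0).add ((hdegdiff E).const_mul s)) (hwdiff.sub (hlam.mul (hdegdiff E)))
      (hnorm s hs) fun r hr => ?_
    have h₁ := heig' s hs (ψ k r)
    have h₂ := heig' r hr (ψ k s)
    rw [weightForm_comm hW0symm, weightForm_comm hEsymm, degreeForm_comm W0,
      degreeForm_comm E] at h₂
    linear_combination h₁ - h₂
  have hbound : ∀ s ∈ Set.Icc (0 : ℝ) 1,
      ‖derivWithin (lam k) (Set.Icc 0 1) s‖ ≤ 4 * Cconn / d0low := fun s hs => by
    have hq := abs_weightForm_self_le hEsymm hEnonneg (ψ k s)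
    have hq₀ : 0 ≤ degreeForm E (ψ k s) (ψ k s) := (abs_nonneg _).trans hq
    have hlq : |lam k s * degreeForm E (ψ k s) (ψ k s)| ≤ degreeForm E (ψ k s) (ψ k s) := by
      rw [abs_mul, abs_of_nonneg hq₀]
      exact mul_le_of_le_one_left hq₀ (hlambound k s hs)
    have hlow : d0low * ∑ x, ψ k s x ^ 2 ≤ 1 :=
      (le_degreeForm_self hdeg₀).trans (by nlinarith [hnorm s hs, mul_nonneg hs.1 hq₀])
    have hup := degreeForm_self_le (v := ψ k s) hdegE
    rw [hderiv s hs, Real.norm_eq_abs, le_div_iff₀ hd0pos]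
    have h₂ := (abs_sub _ _).trans (add_le_add hq hlq)
    nlinarith [mul_le_mul_of_nonneg_right (h₂.trans (add_le_add hup hup)) hd0pos.le,
      mul_le_mul_of_nonneg_left hlow hC₀]
  have h := (convex_Icc (0 : ℝ) 1).norm_image_sub_le_of_norm_derivWithin_le (hlamdiff k) hbound
    (Set.left_mem_Icc.2 zero_le_one) ht
  simpa [abs_of_nonneg ht.1] using h
end

section
/- (Preservation of the I-eigen-gap) Suppose for each k = 1,…,n there are differentiable functions λ_k : [0,1] → ℝ and ψ_k : [0,1] → ℝ^V with W(t)ψ_k(t) = λ_k(t)D(t)ψ_k(t), ψ_k(t)ᵀD(t)ψ_j(t) = δ_{kj}, and |λ_k(t)| ≤ 1 for all t∈[0,1]. Let I ⊆ {1,…,n} and define the I-eigen-gap Δ(t) := min_{i∈I, j∉I} |λ_i(t) − λ_j(t)|. If for some constant Δ > 0 one has Δ(0) ≥ 2Δ and C_conn/d0_low ≤ Δ/8, then Δ(t) ≥ Δ for all t∈[0,1]. -/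
open Finset

/-- Subtracting the eigenvalue equations of `W0 + sE` and `W0 + tE`, tested against each other's
eigenvectors. -/
lemma eigenpair_difference_identity {V : Type*} [Fintype V] {W0 E : Matrix V V ℝ}
    (hW0 : W0.IsSymm) (hE : E.IsSymm) {s t μ ν : ℝ} {u v : V → ℝ}
    (hu : ∀ x, ∑ y, (W0 x y + t * E x y) * u y
      = ν * ((∑ y, (W0 x y + t * E x y)) * u x))
    (hv : ∀ x, ∑ y, (W0 x y + s * E x y) * v y
      = μ * ((∑ y, (W0 x y + s * E x y)) * v x)) :
    (s - t) * ∑ x, ∑ y, E x y * u x * v y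
      = (μ - ν) * ∑ x, u x * (∑ y, (W0 x y + t * E x y)) * v x
        + μ * ((s - t) * ∑ x, (∑ y, E x y) * u x * v x) := by
  have h1 : ∑ x, ∑ y, (W0 x y + s * E x y) * u x * v y
      = μ * ∑ x, u x * (∑ y, (W0 x y + s * E x y)) * v x := by
    rw [mul_sum]
    refine sum_congr rfl fun x _ => ?_
    rw [show μ * (u x * (∑ y, (W0 x y + s * E x y)) * v x)
      = u x * (μ * ((∑ y, (W0 x y + s * E x y)) * v x)) by ring, ← hv x, mul_sum]
    exact sum_congr rfl fun y _ => by ring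
  have h2 : ∑ x, ∑ y, (W0 x y + t * E x y) * u x * v y
      = ν * ∑ x, u x * (∑ y, (W0 x y + t * E x y)) * v x := by
    rw [sum_comm, mul_sum]
    refine sum_congr rfl fun x _ => ?_
    rw [show ν * (u x * (∑ y, (W0 x y + t * E x y)) * v x)
      = v x * (ν * ((∑ y, (W0 x y + t * E x y)) * u x)) by ring, ← hu x, mul_sum]
    refine sum_congr rfl fun y _ => ?_
    rw [hW0.apply x y, hE.apply x y]
    ring
  have h3 : (s - t) * ∑ x, ∑ y, E x y * u x * v y
      = ∑ x, ∑ y, (W0 x y + s * E x y) * u x * v y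
        - ∑ x, ∑ y, (W0 x y + t * E x y) * u x * v y := by
    simp only [mul_sum, ← sum_sub_distrib]
    exact sum_congr rfl fun x _ => sum_congr rfl fun y _ => by ring
  have h4 : ∑ x, u x * (∑ y, (W0 x y + s * E x y)) * v x
      = ∑ x, u x * (∑ y, (W0 x y + t * E x y)) * v x
        + (s - t) * ∑ x, (∑ y, E x y) * u x * v x := by
    rw [mul_sum, ← sum_add_distrib]
    refine sum_congr rfl fun x _ => ?_
    simp only [sum_add_distrib, ← mul_sum]
    ring
  rw [h3, h1, h2, h4]
  ring

/-- A nonnegative symmetric quadratic form is dominated by its row sums. -/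
lemma abs_quadraticForm_le_rowSum {V : Type*} [Fintype V] {E : Matrix V V ℝ}
    (hE : E.IsSymm) (hnonneg : ∀ x y, 0 ≤ E x y) (u : V → ℝ) :
    |∑ x, ∑ y, E x y * u x * u y| ≤ ∑ x, (∑ y, E x y) * u x * u x := by
  have hsq : ∑ x, (∑ y, E x y) * u x * u x
      = ∑ x, ∑ y, E x y * ((u x ^ 2 + u y ^ 2) / 2) := by
    have hx : ∑ x, (∑ y, E x y) * u x * u x = ∑ x, ∑ y, E x y * u x ^ 2 := by
      simp only [sum_mul]
      exact sum_congr rfl fun x _ => sum_congr rfl fun y _ => by ring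
    have hy : ∑ x, ∑ y, E x y * u y ^ 2 = ∑ x, ∑ y, E x y * u x ^ 2 := by
      rw [sum_comm]
      exact sum_congr rfl fun x _ => sum_congr rfl fun y _ => by rw [hE.apply x y]
    have hxy : ∑ x, ∑ y, E x y * ((u x ^ 2 + u y ^ 2) / 2)
        = (∑ x, ∑ y, E x y * u x ^ 2 + ∑ x, ∑ y, E x y * u y ^ 2) / 2 := by
      simp only [← sum_add_distrib, sum_div]
      exact sum_congr rfl fun x _ => sum_congr rfl fun y _ => by ring
    rw [hxy, hy, hx]
    ring
  rw [hsq]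
  refine (abs_sum_le_sum_abs _ _).trans (sum_le_sum fun x _ => ?_)
  refine (abs_sum_le_sum_abs _ _).trans (sum_le_sum fun y _ => ?_)
  rw [mul_assoc, abs_mul, abs_of_nonneg (hnonneg x y)]
  refine mul_le_mul_of_nonneg_left (abs_le.mpr ⟨?_, ?_⟩) (hnonneg x y)
  · nlinarith [sq_nonneg (u x + u y)]
  · nlinarith [sq_nonneg (u x - u y)]

/-- Every row sum of a cross-supported matrix is at most its total cross weight. -/
lemma rowSum_le_crossWeight {V : Type*} [Fintype V] [DecidableEq V] {B C : Finset V}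
    (hdisj : Disjoint B C) (hunion : B ∪ C = Finset.univ) {E : Matrix V V ℝ}
    (hE : E.IsSymm) (hnonneg : ∀ x y, 0 ≤ E x y)
    (hcross : ∀ x y, ¬((x ∈ B ∧ y ∈ C) ∨ (x ∈ C ∧ y ∈ B)) → E x y = 0) (x : V) :
    ∑ y, E x y ≤ ∑ x ∈ B, ∑ y ∈ C, E x y := by
  have hnot : ∀ z, z ∈ B → z ∉ C := fun z hB hC => Finset.disjoint_left.mp hdisj hB hC
  rw [← hunion, sum_union hdisj]
  rcases mem_union.mp (hunion ▸ mem_univ x) with hx | hx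
  · have h0 : ∑ y ∈ B, E x y = 0 := sum_eq_zero fun y hy => hcross x y (by
      have := hnot x hx
      have := hnot y hy
      tauto)
    rw [h0, zero_add]
    exact single_le_sum (f := fun x => ∑ y ∈ C, E x y)
      (fun z _ => sum_nonneg fun y _ => hnonneg z y) hx
  · have h0 : ∑ y ∈ C, E x y = 0 := sum_eq_zero fun y hy => hcross x y (by
      have hxB : x ∉ B := fun h => hnot x h hx
      have hyB : y ∉ B := fun h => hnot y h hy
      tauto)
    rw [h0, add_zero]
    refine sum_le_sum fun y _ => ?_
    rw [← hE.apply x y]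
    exact single_le_sum (f := fun z => E y z) (fun z _ => hnonneg y z) hx

/-- Hellmann–Feynman formula for a generalized eigenpair along the deformation `W0 + tE`. -/
lemma derivWithin_eigenvalue_eq {V : Type*} [Fintype V] {W0 E : Matrix V V ℝ}
    (hW0 : W0.IsSymm) (hE : E.IsSymm) {lam : ℝ → ℝ} {ψ : ℝ → V → ℝ}
    (hlam : DifferentiableOn ℝ lam (Set.Icc (0 : ℝ) 1))
    (hψ : ∀ x, DifferentiableOn ℝ (fun s => ψ s x) (Set.Icc (0 : ℝ) 1))
    (heig : ∀ t ∈ Set.Icc (0 : ℝ) 1, ∀ x, ∑ y, (W0 x y + t * E x y) * ψ t y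
      = lam t * ((∑ y, (W0 x y + t * E x y)) * ψ t x))
    (hnorm : ∀ t ∈ Set.Icc (0 : ℝ) 1,
      ∑ x, ψ t x * (∑ y, (W0 x y + t * E x y)) * ψ t x = 1)
    {t : ℝ} (ht : t ∈ Set.Icc (0 : ℝ) 1) :
    derivWithin lam (Set.Icc (0 : ℝ) 1) t = ∑ x, ∑ y, E x y * ψ t x * ψ t y
      - lam t * ∑ x, (∑ y, E x y) * ψ t x * ψ t x := by
  have hd : ∀ {f : ℝ → ℝ}, DifferentiableOn ℝ f (Set.Icc (0 : ℝ) 1) →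
      HasDerivWithinAt f (derivWithin f (Set.Icc (0 : ℝ) 1) t) (Set.Icc (0 : ℝ) 1) t :=
    fun hf => (hf t ht).hasDerivWithinAt
  have hsub := (hasDerivWithinAt_id t (Set.Icc (0 : ℝ) 1)).sub_const t
  have hE' := hd (f := fun s => ∑ x, ∑ y, E x y * ψ t x * ψ s y) (by fun_prop)
  have hD' := hd (f := fun s => ∑ x, ψ t x * (∑ y, (W0 x y + t * E x y)) * ψ s x)
    (by fun_prop)
  have he' := hd (f := fun s => ∑ x, (∑ y, E x y) * ψ t x * ψ s x) (by fun_prop)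
  have hleft := hsub.mul hE'
  have hright := (((hd hlam).sub_const (lam t)).mul hD').add
    ((hd hlam).mul (hsub.mul he'))
  have heq := (uniqueDiffOn_Icc zero_lt_one t ht).eq_deriv _ hleft
    (hright.congr_of_mem (fun s hs =>
      eigenpair_difference_identity hW0 hE (heig t ht) (heig s hs)) ht)
  simp only [id, sub_self, Pi.mul_apply, zero_mul, mul_zero, add_zero, one_mul, zero_add,
    hnorm t ht, mul_one] at heq
  linarith

/-- Bound on the speed of a normalized generalized eigenvalue in the unit interval. -/
lemma abs_derivWithin_eigenvalue_le {V : Type*} [Fintype V] {W0 E : Matrix V V ℝ}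
    (hW0 : W0.IsSymm) (hE : E.IsSymm) (hnonneg : ∀ x y, 0 ≤ E x y)
    {c d : ℝ} (hc : ∀ x, ∑ y, E x y ≤ c) (hc0 : 0 ≤ c) (hd : ∀ x, d ≤ ∑ y, W0 x y)
    (hd0 : 0 < d) {lam : ℝ → ℝ} {ψ : ℝ → V → ℝ}
    (hlam : DifferentiableOn ℝ lam (Set.Icc (0 : ℝ) 1))
    (hψ : ∀ x, DifferentiableOn ℝ (fun s => ψ s x) (Set.Icc (0 : ℝ) 1))
    (heig : ∀ t ∈ Set.Icc (0 : ℝ) 1, ∀ x, ∑ y, (W0 x y + t * E x y) * ψ t y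
      = lam t * ((∑ y, (W0 x y + t * E x y)) * ψ t x))
    (hnorm : ∀ t ∈ Set.Icc (0 : ℝ) 1,
      ∑ x, ψ t x * (∑ y, (W0 x y + t * E x y)) * ψ t x = 1)
    (hbound : ∀ t ∈ Set.Icc (0 : ℝ) 1, |lam t| ≤ 1)
    {t : ℝ} (ht : t ∈ Set.Icc (0 : ℝ) 1) :
    |derivWithin lam (Set.Icc (0 : ℝ) 1) t| ≤ 2 * (c / d) := by
  rw [derivWithin_eigenvalue_eq hW0 hE hlam hψ heig hnorm ht]
  have hQ := abs_quadraticForm_le_rowSum hE hnonneg (ψ t)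
  have hR0 : 0 ≤ ∑ x, (∑ y, E x y) * ψ t x * ψ t x := (abs_nonneg _).trans hQ
  have hR : ∑ x, (∑ y, E x y) * ψ t x * ψ t x ≤ c / d := by
    rw [← mul_one (c / d), ← hnorm t ht, mul_sum]
    refine sum_le_sum fun x _ => ?_
    have hdeg : d ≤ ∑ y, (W0 x y + t * E x y) :=
      (hd x).trans (sum_le_sum fun y _ => le_add_of_nonneg_right
        (mul_nonneg ht.1 (hnonneg x y)))
    have hcd : c ≤ c / d * ∑ y, (W0 x y + t * E x y) := by
      calc c = c / d * d := by field_simp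
        _ ≤ _ := mul_le_mul_of_nonneg_left hdeg (by positivity)
    nlinarith [mul_le_mul_of_nonneg_right ((hc x).trans hcd) (mul_self_nonneg (ψ t x))]
  have hlamR : |lam t * ∑ x, (∑ y, E x y) * ψ t x * ψ t x|
      ≤ ∑ x, (∑ y, E x y) * ψ t x * ψ t x := by
    rw [abs_mul, abs_of_nonneg hR0]
    exact mul_le_of_le_one_left hR0 (hbound t ht)
  linarith [abs_sub (∑ x, ∑ y, E x y * ψ t x * ψ t y)
    (lam t * ∑ x, (∑ y, E x y) * ψ t x * ψ t x)]

/-- Preservation of the I-eigen-gap: in the setting of the deformation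
`W(t) = W0 + tE` with differentiable `D(t)`-orthonormal eigenpairs `(λ_k, ψ_k)` and
`|λ_k(t)| ≤ 1`, if the initial `I`-eigen-gap satisfies `Δ(0) ≥ 2Δ` and
`C_conn/d0low ≤ Δ/8`, then `Δ(t) ≥ Δ` for all `t ∈ [0,1]`, i.e.
`|λ_i(t) − λ_j(t)| ≥ Δ` for all `i ∈ I`, `j ∉ I`. -/
theorem I_eigen_gap_preservation
    {V : Type*} [Fintype V] [DecidableEq V] [Nonempty V]
    (B C : Finset V) (hdisj : Disjoint B C) (hunion : B ∪ C = Finset.univ)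
    (hBne : B.Nonempty) (hCne : C.Nonempty)
    (W0 E : Matrix V V ℝ)
    (hW0symm : W0.IsSymm) (hW0nonneg : ∀ x y, 0 ≤ W0 x y)
    (hW0cross : ∀ x y, ((x ∈ B ∧ y ∈ C) ∨ (x ∈ C ∧ y ∈ B)) → W0 x y = 0)
    (hEsymm : E.IsSymm) (hEnonneg : ∀ x y, 0 ≤ E x y)
    (hEcross : ∀ x y, ¬((x ∈ B ∧ y ∈ C) ∨ (x ∈ C ∧ y ∈ B)) → E x y = 0)
    (Cconn : ℝ) (hCconn : Cconn = ∑ x ∈ B, ∑ y ∈ C, E x y)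
    (d0low : ℝ)
    (hd0low : d0low = Finset.univ.inf' Finset.univ_nonempty (fun x => ∑ y, W0 x y))
    (hd0pos : 0 < d0low)
    (lam : V → ℝ → ℝ) (ψ : V → ℝ → V → ℝ)
    (hlamdiff : ∀ k, DifferentiableOn ℝ (lam k) (Set.Icc (0 : ℝ) 1))
    (hψdiff : ∀ k x, DifferentiableOn ℝ (fun s => ψ k s x) (Set.Icc (0 : ℝ) 1))
    (heig : ∀ k, ∀ t ∈ Set.Icc (0 : ℝ) 1, ∀ x,
      ∑ y, (W0 x y + t * E x y) * ψ k t y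
        = lam k t * ((∑ y, (W0 x y + t * E x y)) * ψ k t x))
    (horth : ∀ t ∈ Set.Icc (0 : ℝ) 1, ∀ k l,
      ∑ x, ψ k t x * (∑ y, (W0 x y + t * E x y)) * ψ l t x = if k = l then 1 else 0)
    (hlambound : ∀ k, ∀ t ∈ Set.Icc (0 : ℝ) 1, |lam k t| ≤ 1)
    (I : Finset V)
    (Δ : ℝ) (hΔ : 0 < Δ)
    (hgap0 : ∀ i ∈ I, ∀ j ∉ I, 2 * Δ ≤ |lam i 0 - lam j 0|)
    (hC : Cconn / d0low ≤ Δ / 8) :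
    ∀ t ∈ Set.Icc (0 : ℝ) 1, ∀ i ∈ I, ∀ j ∉ I, Δ ≤ |lam i t - lam j t| := by
  have hrow : ∀ x, ∑ y, E x y ≤ Cconn := fun x =>
    hCconn ▸ rowSum_le_crossWeight hdisj hunion hEsymm hEnonneg hEcross x
  have hC0 : 0 ≤ Cconn :=
    hCconn ▸ sum_nonneg fun x _ => sum_nonneg fun y _ => hEnonneg x y
  have hdeg : ∀ x, d0low ≤ ∑ y, W0 x y := fun x => hd0low ▸ inf'_le _ (mem_univ x)
  have hmove : ∀ k, ∀ t ∈ Set.Icc (0 : ℝ) 1, |lam k t - lam k 0| ≤ Δ / 4 := by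
    intro k t ht
    have hspeed : ∀ s ∈ Set.Icc (0 : ℝ) 1,
        ‖derivWithin (lam k) (Set.Icc (0 : ℝ) 1) s‖ ≤ Δ / 4 := fun s hs => by
      have := abs_derivWithin_eigenvalue_le hW0symm hEsymm hEnonneg hrow hC0 hdeg hd0pos
        (hlamdiff k) (hψdiff k) (heig k) (fun r hr => by simpa using horth r hr k k)
        (hlambound k) hs
      rw [Real.norm_eq_abs]
      linarith
    have hlip := (convex_Icc (0 : ℝ) 1).norm_image_sub_le_of_norm_derivWithin_le
      (hlamdiff k) hspeed (Set.left_mem_Icc.mpr zero_le_one) ht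
    rw [Real.norm_eq_abs, Real.norm_eq_abs, sub_zero, abs_of_nonneg ht.1] at hlip
    nlinarith [ht.2]
  intro t ht i hi j hj
  have hgap := hgap0 i hi j hj
  have hi' := abs_le.mp (hmove i t ht)
  have hj' := abs_le.mp (hmove j t ht)
  rcases le_abs.mp hgap with h | h
  · exact le_abs.mpr (Or.inl (by linarith))
  · exact le_abs.mpr (Or.inr (by linarith))
end

section
/- Let Ψ be an n×n real matrix whose columns ψ_1,…,ψ_n satisfy ΨᵀDΨ = Id, where D is diagonal with diagonal entries d(x) ≥ d0_low > 0. Let D_E be a diagonal matrix with |D_E(y,y)| ≤ Σ_{z} E(y,z) for a symmetric nonnegative matrix E supported only on cross entries of a partition V = B ∪ C, and set C_conn = Σ_{y∈B,z∈C}E(y,z). For a subset I of indices put S(y) = Σ_{k∈I} ψ_k(y)². Then for every x∈V, |Σ_{k∈I} Σ_{j∈I} (ψ_jᵀ D_E ψ_k) ψ_k(x) ψ_j(x)| ≤ S(x) · (2·C_conn/d0_low). -/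
open Finset

/-- For a family that is orthonormal for the weight `d ≥ d₀ > 0`, the diagonal of the
reproducing kernel is at most `1 / d₀`. -/
lemma sum_sq_le_one_div_of_weighted_orthonormal {V ι : Type*} [Fintype V] [DecidableEq ι]
    {d : V → ℝ} {d₀ : ℝ} (hd₀ : 0 < d₀) (hd : ∀ x, d₀ ≤ d x) {ψ : ι → V → ℝ}
    (horth : ∀ k l, ∑ x, ψ k x * d x * ψ l x = if k = l then 1 else 0)
    (I : Finset ι) (y : V) : ∑ k ∈ I, ψ k y ^ 2 ≤ 1 / d₀ := by
  set S := ∑ k ∈ I, ψ k y ^ 2 with hS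
  have hS_nonneg : 0 ≤ S := sum_nonneg fun _ _ => sq_nonneg _
  have norm_sq : ∑ x, d x * (∑ k ∈ I, ψ k y * ψ k x) ^ 2 = S := by
    calc ∑ x, d x * (∑ k ∈ I, ψ k y * ψ k x) ^ 2
        = ∑ x, ∑ k ∈ I, ∑ l ∈ I, ψ k y * ψ l y * (ψ k x * d x * ψ l x) := by
          refine sum_congr rfl fun x _ => ?_
          rw [sq, sum_mul_sum, mul_sum]
          refine sum_congr rfl fun k _ => ?_
          rw [mul_sum]
          exact sum_congr rfl fun l _ => by ring
      _ = ∑ k ∈ I, ∑ l ∈ I, ψ k y * ψ l y * ∑ x, ψ k x * d x * ψ l x := by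
          rw [sum_comm]
          refine sum_congr rfl fun k _ => ?_
          rw [sum_comm]
          exact sum_congr rfl fun l _ => (mul_sum _ _ _).symm
      _ = S := by
          rw [hS]
          refine sum_congr rfl fun k hk => ?_
          simp [horth, hk, sq]
  have eval_le : d y * S ^ 2 ≤ S := by
    have h := single_le_sum (f := fun x => d x * (∑ k ∈ I, ψ k y * ψ k x) ^ 2)
      (fun x _ => mul_nonneg (hd₀.le.trans (hd x)) (sq_nonneg _)) (mem_univ y)
    simpa only [norm_sq, ← sq, ← hS] using h
  rw [le_div_iff₀ hd₀]
  rcases hS_nonneg.eq_or_lt with h | h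
  · simp [← h]
  · have h2 := mul_le_mul_of_nonneg_right (hd y) (sq_nonneg S)
    exact le_of_mul_le_mul_right (by nlinarith) h

/-- The total mass of a symmetric matrix supported on the cross entries of a partition is twice
the mass of one off-diagonal block. -/
lemma sum_sum_eq_two_mul_of_cross_support {V : Type*} [Fintype V] [DecidableEq V]
    {B C : Finset V} (hdisj : Disjoint B C) (hunion : B ∪ C = Finset.univ)
    {E : Matrix V V ℝ} (hEsymm : E.IsSymm)
    (hEcross : ∀ x y, ¬((x ∈ B ∧ y ∈ C) ∨ (x ∈ C ∧ y ∈ B)) → E x y = 0) :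
    ∑ y, ∑ z, E y z = 2 * ∑ y ∈ B, ∑ z ∈ C, E y z := by
  have hB : ∀ y ∈ B, ∑ z, E y z = ∑ z ∈ C, E y z := fun y hy =>
    (sum_subset (subset_univ C) fun z _ hz => hEcross y z (by
      have := disjoint_left.mp hdisj hy
      tauto)).symm
  have hC : ∀ y ∈ C, ∑ z, E y z = ∑ z ∈ B, E z y := fun y hy => by
    rw [← sum_subset (subset_univ B) fun z _ hz => hEcross y z (by
      have := disjoint_right.mp hdisj hy
      tauto)]
    exact sum_congr rfl fun z _ => hEsymm.apply z y
  rw [← hunion, sum_union hdisj, hunion, sum_congr rfl hB, sum_congr rfl hC,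
    sum_comm (s := C), two_mul]

/-- Bound on the diagonal (within-`I`) term of the evolution of the spectral
embedding norm: with a complete `D`-orthonormal family `ψ_k` (`d(x) ≥ d0low > 0`), a
diagonal matrix `D_E` dominated entrywise by the row sums of the cross-supported matrix `E`,
and `S(y) = ∑_{k∈I} ψ_k(y)²`,
`|∑_{k,j∈I} (ψ_jᵀD_Eψ_k) ψ_k(x)ψ_j(x)| ≤ S(x)·(2 C_conn/d0low)` for every `x`. -/
theorem embedding_norm_diagonal_term_bound
    {V : Type*} [Fintype V] [DecidableEq V]
    (B C : Finset V) (hdisj : Disjoint B C) (hunion : B ∪ C = Finset.univ)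
    (hBne : B.Nonempty) (hCne : C.Nonempty)
    (E : Matrix V V ℝ) (hEsymm : E.IsSymm) (hEnonneg : ∀ x y, 0 ≤ E x y)
    (hEcross : ∀ x y, ¬((x ∈ B ∧ y ∈ C) ∨ (x ∈ C ∧ y ∈ B)) → E x y = 0)
    (Cconn : ℝ) (hCconn : Cconn = ∑ y ∈ B, ∑ z ∈ C, E y z)
    (d : V → ℝ) (d0low : ℝ) (hd0pos : 0 < d0low) (hdlow : ∀ x, d0low ≤ d x)
    -- complete D-orthonormal family (a square matrix of columns, indexed by k : V)
    (ψ : V → V → ℝ)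
    (horth : ∀ k l, ∑ x, ψ k x * d x * ψ l x = if k = l then 1 else 0)
    (DE : V → ℝ) (hDE : ∀ y, |DE y| ≤ ∑ z, E y z)
    (I : Finset V) :
    ∀ x, |∑ k ∈ I, ∑ j ∈ I, (∑ y, ψ j y * DE y * ψ k y) * ψ k x * ψ j x|
      ≤ (∑ k ∈ I, (ψ k x) ^ 2) * (2 * Cconn / d0low) := by
  intro x
  have kernel_form : ∑ k ∈ I, ∑ j ∈ I, (∑ y, ψ j y * DE y * ψ k y) * ψ k x * ψ j x
      = ∑ y, DE y * (∑ k ∈ I, ψ k x * ψ k y) ^ 2 := by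
    simp_rw [sq, sum_mul_sum, mul_sum, sum_mul]
    rw [sum_comm (s := univ)]
    refine sum_congr rfl fun k _ => ?_
    rw [sum_comm (s := univ)]
    exact sum_congr rfl fun j _ => sum_congr rfl fun y _ => by ring
  have kernel_sq_le : ∀ y, (∑ k ∈ I, ψ k x * ψ k y) ^ 2 ≤ (∑ k ∈ I, ψ k x ^ 2) * (1 / d0low) :=
    fun y => (sum_mul_sq_le_sq_mul_sq I _ _).trans <|
      mul_le_mul_of_nonneg_left
        (sum_sq_le_one_div_of_weighted_orthonormal hd0pos hdlow horth I y)
        (sum_nonneg fun _ _ => sq_nonneg _)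
  rw [kernel_form]
  calc |∑ y, DE y * (∑ k ∈ I, ψ k x * ψ k y) ^ 2|
      ≤ ∑ y, |DE y * (∑ k ∈ I, ψ k x * ψ k y) ^ 2| := abs_sum_le_sum_abs _ _
    _ ≤ ∑ y, (∑ z, E y z) * ((∑ k ∈ I, ψ k x ^ 2) * (1 / d0low)) := by
        refine sum_le_sum fun y _ => ?_
        rw [abs_mul, abs_of_nonneg (sq_nonneg (∑ k ∈ I, ψ k x * ψ k y))]
        exact mul_le_mul (hDE y) (kernel_sq_le y) (sq_nonneg _)
          (sum_nonneg fun z _ => hEnonneg y z)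
    _ = (∑ k ∈ I, (ψ k x) ^ 2) * (2 * Cconn / d0low) := by
        rw [← sum_mul, sum_sum_eq_two_mul_of_cross_support hdisj hunion hEsymm hEcross, ← hCconn]
        ring
end

section
/- (Evolution of the spectral embedding norm) Suppose for each k = 1,…,n there are functions λ_k : [0,1] → ℝ and ψ_k : [0,1] → ℝ^V, differentiable at a time t ∈ (0,1), satisfying W(s)ψ_k(s) = λ_k(s)D(s)ψ_k(s) and ψ_k(s)ᵀD(s)ψ_j(s) = δ_{kj} for s near t, and suppose the eigenvalues λ_1(t),…,λ_n(t) are pairwise distinct. Let I ⊆ {1,…,n} and S(x,s) = Σ_{k∈I} ψ_k(s)(x)². Then for every x∈V, ∂S/∂t (x,t) = − Σ_{k∈I} Σ_{j∈I} (ψ_jᵀ D'(t) ψ_k) ψ_k(x)ψ_j(x) + 2 Σ_{k∈I} Σ_{j∉I} [ψ_jᵀ(E − λ_k(t) D'(t))ψ_k / (λ_k(t) − λ_j(t))] ψ_k(x)ψ_j(x), where all eigenvectors and eigenvalues on the right-hand side are evaluated at time t, and D'(t) is the diagonal matrix with entries Σ_y E(x,y). -/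
open Finset

/-- A family `φ`, orthonormal for the weight `d` and indexed by the vertices themselves, is complete:
every vector is the sum of its components along `φ`. -/
lemma eq_sum_of_weighted_orthonormal {V : Type*} [Fintype V] [DecidableEq V]
    {φ : V → V → ℝ} {d : V → ℝ}
    (h : ∀ k l, ∑ x, φ k x * d x * φ l x = if k = l then 1 else 0) (v : V → ℝ) (x : V) :
    v x = ∑ j, (∑ y, φ j y * d y * v y) * φ j x := by
  have hPQ : Matrix.of φ * Matrix.of (fun y l => d y * φ l y) = 1 := by
    ext k l
    simp only [Matrix.mul_apply, Matrix.of_apply, Matrix.one_apply, ← h k l, mul_assoc]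
  have hQP := mul_eq_one_comm.mp hPQ
  have hres : ∀ y, ∑ l, d y * φ l y * φ l x = if y = x then 1 else 0 := fun y => by
    simpa [Matrix.mul_apply, Matrix.one_apply] using congrFun (congrFun hQP y) x
  calc v x = ∑ y, (if y = x then 1 else 0) * v y := by simp
    _ = ∑ y, ∑ j, φ j y * d y * v y * φ j x := by
      refine sum_congr rfl fun y _ => ?_
      rw [← hres y, sum_mul]
      exact sum_congr rfl fun j _ => by ring
    _ = _ := by
      rw [sum_comm]
      simp only [sum_mul]

lemma HasDerivAt.eq_of_eventuallyEq {f g : ℝ → ℝ} {f' g' t : ℝ} (hf : HasDerivAt f f' t)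
    (hg : HasDerivAt g g' t) (h : f =ᶠ[nhds t] g) : f' = g' :=
  hf.unique (hg.congr_of_eventuallyEq h)

lemma hasDerivAt_add_mul (a b t : ℝ) : HasDerivAt (fun s : ℝ => a + s * b) b t := by
  simpa using ((hasDerivAt_id t).mul_const b).const_add a

/-- If the symmetrisation of `a` is `-b`, then twice the sum of `a` over `I × I` is minus that of `b`. -/
lemma two_mul_sum_eq_neg_sum {ι : Type*} {I : Finset ι} {a b : ι → ι → ℝ}
    (h : ∀ k j, a k j + a j k = -b k j) :
    2 * ∑ k ∈ I, ∑ j ∈ I, a k j = -∑ k ∈ I, ∑ j ∈ I, b k j := by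
  rw [two_mul]
  nth_rewrite 2 [sum_comm]
  simp only [← sum_add_distrib, ← sum_neg_distrib, h]

/-- Pairing the differentiated eigenvalue equation with another eigenvector. -/
lemma mul_sub_eq_of_eigenvector_deriv {V : Type*} [Fintype V] {W E : V → V → ℝ}
    {d d' φ φ' χ : V → ℝ} {μ μ' ν : ℝ} (hW : ∀ x y, W x y = W y x)
    (hφ : ∀ x, ∑ y, (E x y * φ y + W x y * φ' y)
      = μ' * (d x * φ x) + μ * (d' x * φ x + d x * φ' x))
    (hχ : ∀ x, ∑ y, W x y * χ y = ν * (d x * χ x))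
    (horth : ∑ x, χ x * d x * φ x = 0) :
    (∑ x, χ x * d x * φ' x) * (μ - ν)
      = (∑ x, ∑ y, χ x * E x y * φ y) - μ * ∑ x, χ x * d' x * φ x := by
  have hswap : ∑ x, ∑ y, χ x * (W x y * φ' y) = ν * ∑ x, χ x * d x * φ' x := by
    rw [sum_comm, mul_sum]
    refine sum_congr rfl fun y _ => ?_
    calc ∑ x, χ x * (W x y * φ' y) = (∑ x, W y x * χ x) * φ' y := by
          rw [sum_mul]
          exact sum_congr rfl fun x _ => by rw [hW x y]; ring
      _ = _ := by rw [hχ y]; ring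
  have hsum : ∑ x, χ x * ∑ y, (E x y * φ y + W x y * φ' y)
      = ∑ x, χ x * (μ' * (d x * φ x) + μ * (d' x * φ x + d x * φ' x)) :=
    sum_congr rfl fun x _ => by rw [hφ x]
  have hleft : ∑ x, χ x * ∑ y, (E x y * φ y + W x y * φ' y)
      = (∑ x, ∑ y, χ x * E x y * φ y) + ν * ∑ x, χ x * d x * φ' x := by
    rw [← hswap, ← sum_add_distrib]
    refine sum_congr rfl fun x _ => ?_
    rw [mul_sum, ← sum_add_distrib]
    exact sum_congr rfl fun y _ => by ring
  have hright : ∑ x, χ x * (μ' * (d x * φ x) + μ * (d' x * φ x + d x * φ' x))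
      = μ' * (∑ x, χ x * d x * φ x) + μ * (∑ x, χ x * d' x * φ x)
        + μ * ∑ x, χ x * d x * φ' x := by
    simp only [mul_sum, ← sum_add_distrib]
    exact sum_congr rfl fun x _ => by ring
  rw [hleft, hright, horth] at hsum
  linarith

/-- Evolution of the spectral embedding norm: in the deformation
`W(s) = W0 + sE` with degree matrix `D(s)` (diagonal of row sums), suppose the
`D(s)`-orthonormal eigenpairs `(λ_k(s), ψ_k(s))` (indexed by `k : V`) are differentiable at
`t ∈ (0,1)`, satisfy the eigen-equations and orthonormality for `s` near `t`, and the
eigenvalues at `t` are pairwise distinct. Then for every `x`, `S(x,s) = ∑_{k∈I} ψ_k(s)(x)²`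
satisfies
`∂S/∂t = −∑_{k,j∈I}(ψ_jᵀD'ψ_k)ψ_k(x)ψ_j(x) + 2∑_{k∈I,j∉I}[ψ_jᵀ(E−λ_kD')ψ_k/(λ_k−λ_j)]ψ_k(x)ψ_j(x)`,
where `D'` is the diagonal matrix of row sums of `E`. -/
theorem embedding_norm_evolution
    {V : Type*} [Fintype V] [DecidableEq V] [Nonempty V]
    (B C : Finset V) (hdisj : Disjoint B C) (hunion : B ∪ C = Finset.univ)
    (hBne : B.Nonempty) (hCne : C.Nonempty)
    (W0 E : Matrix V V ℝ)
    (hW0symm : W0.IsSymm) (hW0nonneg : ∀ x y, 0 ≤ W0 x y)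
    (hW0cross : ∀ x y, ((x ∈ B ∧ y ∈ C) ∨ (x ∈ C ∧ y ∈ B)) → W0 x y = 0)
    (hEsymm : E.IsSymm) (hEnonneg : ∀ x y, 0 ≤ E x y)
    (hEcross : ∀ x y, ¬((x ∈ B ∧ y ∈ C) ∨ (x ∈ C ∧ y ∈ B)) → E x y = 0)
    (d0low : ℝ)
    (hd0low : d0low = Finset.univ.inf' Finset.univ_nonempty (fun x => ∑ y, W0 x y))
    (hd0pos : 0 < d0low)
    (t : ℝ) (ht : t ∈ Set.Ioo (0 : ℝ) 1)
    (lam : V → ℝ → ℝ) (lamd : V → ℝ)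
    (hlam : ∀ k, HasDerivAt (lam k) (lamd k) t)
    (ψ : V → ℝ → V → ℝ) (ψd : V → V → ℝ)
    (hψ : ∀ k x, HasDerivAt (fun s => ψ k s x) (ψd k x) t)
    (heig : ∀ k, ∀ᶠ s in nhds t, ∀ x,
      ∑ y, (W0 x y + s * E x y) * ψ k s y
        = lam k s * ((∑ y, (W0 x y + s * E x y)) * ψ k s x))
    (horth : ∀ k l, ∀ᶠ s in nhds t,
      ∑ x, ψ k s x * (∑ y, (W0 x y + s * E x y)) * ψ l s x = if k = l then 1 else 0)
    (hdist : Function.Injective fun k => lam k t)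
    (I : Finset V) :
    ∀ x, HasDerivAt (fun s => ∑ k ∈ I, (ψ k s x) ^ 2)
      (-(∑ k ∈ I, ∑ j ∈ I, (∑ y, ψ j t y * (∑ z, E y z) * ψ k t y) * ψ k t x * ψ j t x)
        + 2 * ∑ k ∈ I, ∑ j ∈ Iᶜ,
            (((∑ y, ∑ z, ψ j t y * E y z * ψ k t z)
                - lam k t * (∑ y, ψ j t y * (∑ z, E y z) * ψ k t y))
              / (lam k t - lam j t)) * ψ k t x * ψ j t x) t := by
  intro x
  have hdeg : ∀ y, HasDerivAt (fun s : ℝ => ∑ z, (W0 y z + s * E y z)) (∑ z, E y z) t :=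
    fun y => HasDerivAt.fun_sum fun z _ => hasDerivAt_add_mul _ _ _
  set d : V → ℝ := fun y => ∑ z, (W0 y z + t * E y z) with hd
  set d' : V → ℝ := fun y => ∑ z, E y z with hd'
  set a : V → V → ℝ := fun k j => ∑ y, ψ j t y * d y * ψd k y with ha
  have hexpand : ∀ k, ψd k x = ∑ j, a k j * ψ j t x := fun k =>
    eq_sum_of_weighted_orthonormal (fun k l => (horth k l).self_of_nhds) (ψd k) x
  have hskew : ∀ k j, a k j + a j k = -∑ y, ψ j t y * d' y * ψ k t y := fun k j => by
    have h := (HasDerivAt.fun_sum fun y (_ : y ∈ univ) =>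
      ((hψ j y).mul (hdeg y)).mul (hψ k y)).eq_of_eventuallyEq
        (hasDerivAt_const t (if j = k then (1 : ℝ) else 0)) (horth j k)
    rw [eq_neg_iff_add_eq_zero, ← h]
    simp only [ha, hd, hd', Pi.mul_apply, ← sum_add_distrib]
    exact sum_congr rfl fun y _ => by ring
  have hoff : ∀ k j, k ≠ j → a k j = ((∑ y, ∑ z, ψ j t y * E y z * ψ k t z)
      - lam k t * ∑ y, ψ j t y * d' y * ψ k t y) / (lam k t - lam j t) := fun k j hkj => by
    rw [eq_div_iff (sub_ne_zero.mpr fun h => hkj (hdist h))]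
    refine mul_sub_eq_of_eigenvector_deriv (W := fun y z => W0 y z + t * E y z) (μ' := lamd k)
      (fun y z => by simp only [hW0symm.apply y z, hEsymm.apply y z]) (fun y => ?_)
      (heig j).self_of_nhds ?_
    · exact (HasDerivAt.fun_sum fun z (_ : z ∈ univ) =>
        (hasDerivAt_add_mul (W0 y z) (E y z) t).mul (hψ k z)).eq_of_eventuallyEq
          ((hlam k).mul ((hdeg y).mul (hψ k y))) ((heig k).mono fun s hs => hs y)
    · simpa [hkj.symm] using (horth j k).self_of_nhds
  have hinner := two_mul_sum_eq_neg_sum (I := I) (a := fun k j => a k j * ψ k t x * ψ j t x)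
    (b := fun k j => (∑ y, ψ j t y * d' y * ψ k t y) * ψ k t x * ψ j t x)
    (fun k j => by linear_combination (ψ k t x * ψ j t x) * hskew k j)
  refine (HasDerivAt.fun_sum fun k (_ : k ∈ I) => (hψ k x).pow 2).congr_deriv ?_
  rw [← hinner, ← mul_add, ← sum_add_distrib, mul_sum]
  refine sum_congr rfl fun k hk => ?_
  have houter : ∀ j ∈ Iᶜ, ((∑ y, ∑ z, ψ j t y * E y z * ψ k t z)
      - lam k t * ∑ y, ψ j t y * d' y * ψ k t y) / (lam k t - lam j t) * ψ k t x * ψ j t x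
        = a k j * ψ k t x * ψ j t x := fun j hj => by
    rw [hoff k j fun h => mem_compl.mp hj (h ▸ hk)]
  rw [sum_congr rfl houter, sum_add_sum_compl, hexpand k, mul_sum, mul_sum]
  exact sum_congr rfl fun j _ => by push_cast; ring
end

section
/- Suppose for each k = 1,…,n there are differentiable functions λ_k : [0,1] → ℝ and ψ_k : [0,1] → ℝ^V with W(t)ψ_k(t) = λ_k(t)D(t)ψ_k(t), ψ_k(t)ᵀD(t)ψ_j(t) = δ_{kj}, and |λ_k(t)| ≤ 1 for all t∈[0,1]; let I ⊆ {1,…,n}, S(x,t) = Σ_{k∈I} ψ_k(t)(x)², and S̄(t) = max_{x∈V} S(x,t). Assume |λ_k(t) − λ_j(t)| ≥ Δ > 0 for all k∈I, j∉I and all t∈[0,1], and that at every t ∈ (0,1) the evolution equation ∂S/∂t(x,t) = − Σ_{k,j∈I}(ψ_jᵀD'(t)ψ_k)ψ_k(x)ψ_j(x) + 2Σ_{k∈I,j∉I}[ψ_jᵀ(E−λ_k D'(t))ψ_k/(λ_k−λ_j)]ψ_k(x)ψ_j(x) holds, where D'(t) is the diagonal matrix with entries Σ_y E(x,y). Then for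 every x∈V and t∈[0,1], |S(x,t) − S(x,0)| ≤ C̃ · ∫₀ᵗ S̄(τ) dτ, where C̃ = (1 + 4/Δ) · (2·C_conn/d0_low). -/
open Finset

/-- If two points both have embedding norm at most `M`, the absolute products of their coordinates
sum to at most `M`. -/
theorem sum_abs_mul_le_of_sum_sq_le {κ : Type*} (s : Finset κ) (f g : κ → ℝ) {M : ℝ}
    (hf : ∑ k ∈ s, f k ^ 2 ≤ M) (hg : ∑ k ∈ s, g k ^ 2 ≤ M) :
    ∑ k ∈ s, |f k * g k| ≤ M := by
  have h : ∑ k ∈ s, |f k * g k| ≤ ∑ k ∈ s, (f k ^ 2 + g k ^ 2) / 2 := by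
    refine Finset.sum_le_sum fun k _ => ?_
    rw [abs_mul]
    nlinarith [sq_nonneg (|f k| - |g k|), sq_abs (f k), sq_abs (g k)]
  rw [← Finset.sum_div, Finset.sum_add_distrib] at h
  linarith

/-- Bound for a weighted double sum over two families of modes of a bilinear form with nonnegative
weights `w p`, coupling the points `a p` and `b p`. -/
theorem abs_sum_bilin_mul_le {V κ ι : Type*} [Fintype ι] (I J : Finset κ) (u : κ → V → ℝ)
    (c : κ → κ → ℝ) (w : ι → ℝ) (a b : ι → V) (x : V) {A M N : ℝ}
    (hA : 0 ≤ A) (hc : ∀ k ∈ I, ∀ j ∈ J, |c k j| ≤ A) (hw : ∀ p, 0 ≤ w p)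
    (hM : ∀ y, ∑ k ∈ I, u k y ^ 2 ≤ M) (hN : ∀ y, ∑ j ∈ J, u j y ^ 2 ≤ N) :
    |∑ k ∈ I, ∑ j ∈ J, c k j * (∑ p, w p * u j (a p) * u k (b p)) * u k x * u j x|
      ≤ A * (∑ p, w p) * (M * N) := by
  have hM0 : 0 ≤ M := (Finset.sum_nonneg fun k _ => sq_nonneg (u k x)).trans (hM x)
  calc |∑ k ∈ I, ∑ j ∈ J, c k j * (∑ p, w p * u j (a p) * u k (b p)) * u k x * u j x|
      ≤ ∑ k ∈ I, ∑ j ∈ J, ∑ p, A * w p * (|u k (b p) * u k x| * |u j (a p) * u j x|) := by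
        refine (Finset.abs_sum_le_sum_abs _ _).trans (Finset.sum_le_sum fun k hk => ?_)
        refine (Finset.abs_sum_le_sum_abs _ _).trans (Finset.sum_le_sum fun j hj => ?_)
        rw [Finset.mul_sum, Finset.sum_mul, Finset.sum_mul]
        refine (Finset.abs_sum_le_sum_abs _ _).trans (Finset.sum_le_sum fun p _ => ?_)
        have h : |c k j * (w p * u j (a p) * u k (b p)) * u k x * u j x|
            = |c k j| * w p * (|u k (b p) * u k x| * |u j (a p) * u j x|) := by
          simp only [abs_mul, abs_of_nonneg (hw p)]
          ring
        rw [h]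
        have := hc k hk j hj
        have := hw p
        gcongr
    _ = ∑ p, A * w p * ((∑ k ∈ I, |u k (b p) * u k x|) * ∑ j ∈ J, |u j (a p) * u j x|) := by
        simp only [Finset.sum_mul_sum]
        simp only [Finset.mul_sum]
        exact (Finset.sum_congr rfl fun k _ => Finset.sum_comm).trans Finset.sum_comm
    _ ≤ ∑ p, A * w p * (M * N) := by
        refine Finset.sum_le_sum fun p _ => ?_
        have := hw p
        have h₁ := sum_abs_mul_le_of_sum_sq_le I (fun k => u k (b p)) (fun k => u k x)
          (hM _) (hM _)
        have h₂ := sum_abs_mul_le_of_sum_sq_le J (fun j => u j (a p)) (fun j => u j x)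
          (hN _) (hN _)
        gcongr
    _ = A * (∑ p, w p) * (M * N) := by
        rw [← Finset.sum_mul, Finset.mul_sum]

/-- A basis that is orthonormal for the weight `d` satisfies `∑ k, (u k x)² = 1 / d x`. -/
theorem mul_sum_sq_eq_one_of_orthonormal {V : Type*} [Fintype V] [DecidableEq V]
    (d : V → ℝ) (u : V → V → ℝ)
    (h : ∀ k l, ∑ x, u k x * d x * u l x = if k = l then 1 else 0) (x : V) :
    d x * ∑ k, u k x ^ 2 = 1 := by
  have h₁ : (Matrix.of u) * (Matrix.of fun x l => d x * u l x) = (1 : Matrix V V ℝ) := by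
    ext k l
    simp only [Matrix.mul_apply, Matrix.of_apply, Matrix.one_apply, ← h k l, mul_assoc]
  have h₂ := congrArg (fun A : Matrix V V ℝ => A x x) (mul_eq_one_comm.mp h₁)
  simp only [Matrix.mul_apply, Matrix.of_apply, Matrix.one_apply_eq] at h₂
  rw [← h₂, Finset.mul_sum]
  exact Finset.sum_congr rfl fun k _ => by ring

/-- The total mass of a symmetric matrix supported on the cross entries of a bipartition is twice
the mass of one off-diagonal block. -/
theorem sum_sum_eq_two_mul_of_cross {V : Type*} [Fintype V] [DecidableEq V]
    (B C : Finset V) (hdisj : Disjoint B C) (hunion : B ∪ C = Finset.univ)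
    (E : Matrix V V ℝ) (hEsymm : E.IsSymm)
    (hEcross : ∀ x y, ¬((x ∈ B ∧ y ∈ C) ∨ (x ∈ C ∧ y ∈ B)) → E x y = 0) :
    ∑ x, ∑ y, E x y = 2 * ∑ x ∈ B, ∑ y ∈ C, E x y := by
  have hBC : ∀ x ∈ B, x ∉ C := fun x hx hx' => Finset.disjoint_left.mp hdisj hx hx'
  have hBB : ∑ x ∈ B, ∑ y ∈ B, E x y = 0 :=
    Finset.sum_eq_zero fun x hx => Finset.sum_eq_zero fun y hy => hEcross x y (by
      have := hBC x hx; have := hBC y hy; tauto)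
  have hCC : ∑ x ∈ C, ∑ y ∈ C, E x y = 0 :=
    Finset.sum_eq_zero fun x hx => Finset.sum_eq_zero fun y hy => hEcross x y (by
      have := hBC x; have := hBC y; tauto)
  have hCB : ∑ x ∈ C, ∑ y ∈ B, E x y = ∑ x ∈ B, ∑ y ∈ C, E x y := by
    refine Finset.sum_comm.trans ?_
    exact Finset.sum_congr rfl fun x _ => Finset.sum_congr rfl fun y _ => hEsymm.apply x y
  rw [← hunion]
  simp only [Finset.sum_union hdisj, Finset.sum_add_distrib]
  rw [hBB, hCC, hCB]
  ring

/-- Bound for the right-hand side of the evolution equation of the embedding norm, for modes with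
embedding norm at most `M` over `I` and at most `N` over all modes. -/
theorem abs_evolution_rhs_le {V : Type*} [Fintype V] [DecidableEq V]
    (E : Matrix V V ℝ) (hE : ∀ x y, 0 ≤ E x y) (μ : V → ℝ) (u : V → V → ℝ)
    (I : Finset V) {Δ M N : ℝ} (hΔ : 0 < Δ) (hμ : ∀ k, |μ k| ≤ 1)
    (hgap : ∀ k ∈ I, ∀ j ∉ I, Δ ≤ |μ k - μ j|)
    (hM : ∀ y, ∑ k ∈ I, u k y ^ 2 ≤ M) (hN : ∀ y, ∑ k, u k y ^ 2 ≤ N) (x : V) :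
    |-(∑ k ∈ I, ∑ j ∈ I, (∑ y, u j y * (∑ z, E y z) * u k y) * u k x * u j x)
        + 2 * ∑ k ∈ I, ∑ j ∈ Iᶜ,
            (((∑ y, ∑ z, u j y * E y z * u k z)
                - μ k * (∑ y, u j y * (∑ z, E y z) * u k y))
              / (μ k - μ j)) * u k x * u j x|
      ≤ (1 + 4 / Δ) * (∑ y, ∑ z, E y z) * (M * N) := by
  have hN' : ∀ s : Finset V, ∀ y, ∑ k ∈ s, u k y ^ 2 ≤ N := fun s y =>
    (Finset.sum_le_univ_sum_of_nonneg fun k => sq_nonneg (u k y)).trans (hN y)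
  have he : ∀ y, 0 ≤ ∑ z, E y z := fun y => Finset.sum_nonneg fun z _ => hE y z
  have hinv : ∀ k ∈ I, ∀ j ∈ Iᶜ, |(μ k - μ j)⁻¹| ≤ 1 / Δ := fun k hk j hj => by
    rw [abs_inv, ← one_div]
    exact one_div_le_one_div_of_le hΔ (hgap k hk j (Finset.mem_compl.mp hj))
  have hquot : ∀ k ∈ I, ∀ j ∈ Iᶜ, |μ k * (μ k - μ j)⁻¹| ≤ 1 / Δ := fun k hk j hj => by
    rw [abs_mul]
    exact (mul_le_of_le_one_left (abs_nonneg _) (hμ k)).trans (hinv k hk j hj)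
  have hdiag := abs_sum_bilin_mul_le I I u (fun _ _ => 1) (fun y => ∑ z, E y z) id id x
    zero_le_one (fun _ _ _ _ => abs_one.le) he hM (hN' I)
  have hadj := abs_sum_bilin_mul_le I Iᶜ u (fun k j => (μ k - μ j)⁻¹)
    (fun p : V × V => E p.1 p.2) Prod.fst Prod.snd x
    (by positivity) hinv (fun p => hE _ _) hM (hN' Iᶜ)
  have hdeg := abs_sum_bilin_mul_le I Iᶜ u (fun k j => μ k * (μ k - μ j)⁻¹)
    (fun y => ∑ z, E y z) id id x (by positivity) hquot he hM (hN' Iᶜ)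
  simp only [Fintype.sum_prod_type, id, one_mul] at hdiag hadj hdeg
  have hsplit : ∑ k ∈ I, ∑ j ∈ Iᶜ, (((∑ y, ∑ z, u j y * E y z * u k z)
        - μ k * (∑ y, u j y * (∑ z, E y z) * u k y)) / (μ k - μ j)) * u k x * u j x
      = (∑ k ∈ I, ∑ j ∈ Iᶜ,
          (μ k - μ j)⁻¹ * (∑ y, ∑ z, E y z * u j y * u k z) * u k x * u j x)
        - ∑ k ∈ I, ∑ j ∈ Iᶜ,
          μ k * (μ k - μ j)⁻¹ * (∑ y, (∑ z, E y z) * u j y * u k y) * u k x * u j x := by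
    simp only [← Finset.sum_sub_distrib, mul_comm (u _ _) (E _ _), mul_comm (u _ _) (∑ z, E _ z)]
    refine Finset.sum_congr rfl fun k _ => Finset.sum_congr rfl fun j _ => ?_
    rw [div_eq_mul_inv]
    ring
  rw [hsplit]
  simp only [mul_comm (u _ _) (∑ z, E _ z)]
  rw [abs_le] at hdiag hadj hdeg ⊢
  have hconst : (1 + 4 / Δ) * (∑ y, ∑ z, E y z) * (M * N)
      = (∑ y, ∑ z, E y z) * (M * N) + 2 * (1 / Δ * (∑ y, ∑ z, E y z) * (M * N))
        + 2 * (1 / Δ * (∑ y, ∑ z, E y z) * (M * N)) := by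
    ring
  rw [hconst]
  constructor <;> linarith [hdiag.1, hdiag.2, hadj.1, hadj.2, hdeg.1, hdeg.2]

/-- A function whose derivative is bounded by `φ` in absolute value on the open interval moves by
at most the integral of `φ`. -/
theorem abs_sub_le_integral_of_abs_hasDerivAt_le {f f' φ : ℝ → ℝ} {a b : ℝ} (hab : a ≤ b)
    (hf : ContinuousOn f (Set.Icc a b)) (hφ : ContinuousOn φ (Set.Icc a b))
    (hderiv : ∀ s ∈ Set.Ioo a b, HasDerivAt f (f' s) s)
    (hbound : ∀ s ∈ Set.Ioo a b, |f' s| ≤ φ s) :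
    |f b - f a| ≤ ∫ s in a..b, φ s := by
  have hint := hφ.integrableOn_Icc (μ := MeasureTheory.volume)
  rw [abs_le]
  constructor
  · have h := intervalIntegral.sub_le_integral_of_hasDeriv_right_of_le hab hf.neg
      (fun s hs => (hderiv s hs).neg.hasDerivWithinAt) hint
      (fun s hs => (neg_le_abs _).trans (hbound s hs))
    simp only [Pi.neg_apply] at h
    linarith
  · exact intervalIntegral.sub_le_integral_of_hasDeriv_right_of_le hab hf
      (fun s hs => (hderiv s hs).hasDerivWithinAt) hint
      (fun s hs => (le_abs_self _).trans (hbound s hs))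

/-- Stability of the spectral embedding norm. In the deformation
`W(t) = W0 + tE` with differentiable `D(t)`-orthonormal eigenpairs `(λ_k, ψ_k)` (indexed by
`k : V`), `|λ_k(t)| ≤ 1`, an `I`-eigen-gap `|λ_k(t) − λ_j(t)| ≥ Δ > 0` for `k ∈ I`,
`j ∉ I` on `[0,1]`, and the evolution equation for `S(x,t) = ∑_{k∈I} ψ_k(t)(x)²` holding on
`(0,1)`, one has `|S(x,t) − S(x,0)| ≤ C̃ ∫₀ᵗ S̄(τ)dτ` with
`C̃ = (1 + 4/Δ)(2 C_conn/d0low)` and `S̄(τ) = max_x S(x,τ)`. -/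
theorem embedding_norm_stability
    {V : Type*} [Fintype V] [DecidableEq V] [Nonempty V]
    (B C : Finset V) (hdisj : Disjoint B C) (hunion : B ∪ C = Finset.univ)
    (hBne : B.Nonempty) (hCne : C.Nonempty)
    (W0 E : Matrix V V ℝ)
    (hW0symm : W0.IsSymm) (hW0nonneg : ∀ x y, 0 ≤ W0 x y)
    (hW0cross : ∀ x y, ((x ∈ B ∧ y ∈ C) ∨ (x ∈ C ∧ y ∈ B)) → W0 x y = 0)
    (hEsymm : E.IsSymm) (hEnonneg : ∀ x y, 0 ≤ E x y)
    (hEcross : ∀ x y, ¬((x ∈ B ∧ y ∈ C) ∨ (x ∈ C ∧ y ∈ B)) → E x y = 0)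
    (Cconn : ℝ) (hCconn : Cconn = ∑ x ∈ B, ∑ y ∈ C, E x y)
    (d0low : ℝ)
    (hd0low : d0low = Finset.univ.inf' Finset.univ_nonempty (fun x => ∑ y, W0 x y))
    (hd0pos : 0 < d0low)
    (lam : V → ℝ → ℝ) (ψ : V → ℝ → V → ℝ)
    (hlamdiff : ∀ k, DifferentiableOn ℝ (lam k) (Set.Icc (0 : ℝ) 1))
    (hψdiff : ∀ k x, DifferentiableOn ℝ (fun s => ψ k s x) (Set.Icc (0 : ℝ) 1))
    (heig : ∀ k, ∀ t ∈ Set.Icc (0 : ℝ) 1, ∀ x,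
      ∑ y, (W0 x y + t * E x y) * ψ k t y
        = lam k t * ((∑ y, (W0 x y + t * E x y)) * ψ k t x))
    (horth : ∀ t ∈ Set.Icc (0 : ℝ) 1, ∀ k l,
      ∑ x, ψ k t x * (∑ y, (W0 x y + t * E x y)) * ψ l t x = if k = l then 1 else 0)
    (hlambound : ∀ k, ∀ t ∈ Set.Icc (0 : ℝ) 1, |lam k t| ≤ 1)
    (I : Finset V)
    (Δ : ℝ) (hΔ : 0 < Δ)
    (hgap : ∀ t ∈ Set.Icc (0 : ℝ) 1, ∀ k ∈ I, ∀ j ∉ I, Δ ≤ |lam k t - lam j t|)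
    -- the evolution equation of S(x,t) on (0,1)
    (hevol : ∀ x, ∀ t ∈ Set.Ioo (0 : ℝ) 1,
      HasDerivAt (fun s => ∑ k ∈ I, (ψ k s x) ^ 2)
        (-(∑ k ∈ I, ∑ j ∈ I, (∑ y, ψ j t y * (∑ z, E y z) * ψ k t y) * ψ k t x * ψ j t x)
          + 2 * ∑ k ∈ I, ∑ j ∈ Iᶜ,
              (((∑ y, ∑ z, ψ j t y * E y z * ψ k t z)
                  - lam k t * (∑ y, ψ j t y * (∑ z, E y z) * ψ k t y))
                / (lam k t - lam j t)) * ψ k t x * ψ j t x) t) :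
    ∀ x, ∀ t ∈ Set.Icc (0 : ℝ) 1,
      |(∑ k ∈ I, (ψ k t x) ^ 2) - ∑ k ∈ I, (ψ k 0 x) ^ 2|
        ≤ ((1 + 4 / Δ) * (2 * Cconn / d0low))
            * ∫ τ in (0 : ℝ)..t,
                Finset.univ.sup' Finset.univ_nonempty (fun y => ∑ k ∈ I, (ψ k τ y) ^ 2) := by
  intro x t ht
  have hS : ∀ y, ContinuousOn (fun s => ∑ k ∈ I, (ψ k s y) ^ 2) (Set.Icc 0 1) := fun y =>
    continuousOn_finsetSum I fun k _ => (hψdiff k y).continuousOn.pow 2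
  have hsup : ContinuousOn (fun τ => Finset.univ.sup' Finset.univ_nonempty
      (fun y => ∑ k ∈ I, (ψ k τ y) ^ 2)) (Set.Icc 0 1) :=
    ContinuousOn.finset_sup'_apply Finset.univ_nonempty fun y _ => hS y
  have hsub : Set.Icc 0 t ⊆ Set.Icc (0 : ℝ) 1 := Set.Icc_subset_Icc_right ht.2
  rw [← intervalIntegral.integral_const_mul]
  refine abs_sub_le_integral_of_abs_hasDerivAt_le ht.1 ((hS x).mono hsub)
    (continuousOn_const.mul (hsup.mono hsub))
    (fun s hs => hevol x s ⟨hs.1, hs.2.trans_le ht.2⟩) fun s hs => ?_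
  have hs' : s ∈ Set.Icc (0 : ℝ) 1 := hsub ⟨hs.1.le, hs.2.le⟩
  have hdeg : ∀ y, d0low ≤ ∑ z, (W0 y z + s * E y z) := fun y => by
    rw [hd0low]
    exact (Finset.inf'_le _ (Finset.mem_univ y)).trans (Finset.sum_le_sum fun z _ =>
      le_add_of_nonneg_right (mul_nonneg hs'.1 (hEnonneg y z)))
  have hN : ∀ y, ∑ k, ψ k s y ^ 2 ≤ 1 / d0low := fun y => by
    rw [le_div_iff₀' hd0pos]
    exact (mul_le_mul_of_nonneg_right (hdeg y)
      (Finset.sum_nonneg fun k _ => sq_nonneg (ψ k s y))).trans_eq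
      (mul_sum_sq_eq_one_of_orthonormal _ (fun k => ψ k s) (horth s hs') y)
  have hM : ∀ y, ∑ k ∈ I, ψ k s y ^ 2
      ≤ Finset.univ.sup' Finset.univ_nonempty (fun y => ∑ k ∈ I, ψ k s y ^ 2) := fun y =>
    Finset.le_sup' (fun y => ∑ k ∈ I, ψ k s y ^ 2) (Finset.mem_univ y)
  refine (abs_evolution_rhs_le E hEnonneg (fun k => lam k s) (fun k => ψ k s) I hΔ
    (fun k => hlambound k s hs') (hgap s hs') hM hN x).trans_eq ?_
  rw [sum_sum_eq_two_mul_of_cross B C hdisj hunion E hEsymm hEcross, ← hCconn]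
  ring
end

section
/- (Initial separation for unequal cluster sizes) Suppose the K clusters C_1,…,C_K composing C have sizes |C_j| = δ_j n with Σ_j δ_j = δ, and that Assumption A1 holds at t=0: I contains exactly K eigenvectors supported on C, each associated with a unique cluster C_j and satisfying (1−ε1)/ν(C_j,0) ≤ ψ(x)² ≤ (1+ε1)/ν(C_j,0) for x∈C_j and ψ(x)² ≤ ε1/ν(C,0) for x∈C∖C_j (0 ≤ ε1 < 1), and |I|−K eigenvectors supported on B satisfying ψ(x)² ≤ (1+ε2)/ν(B,0) for x∈B (ε2 ≥ 0). Then for every x∈C_j, (1−ε1)/(n·d0_up·δ_j) ≤ S(x,0) ≤ (1/(n·d0_low))·(ε1/(δ/K) + (1+ε1)/δ_j), and for every x∈B, S(x,0) ≤ (1+ε2)(|I|−K)/(n·d0_low·(1−δ)). -/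
open Finset

/-- Initial separation for unequal cluster sizes: with clusters
`C_1,…,C_K` of sizes `δ_j n` (`∑_j δ_j = δ`) and Assumption A1 at `t = 0`, the spectral
embedding norm `S(x,0) = ∑_{k∈I} ψ_k(x)²` satisfies, for `x ∈ C_j`,
`(1−ε1)/(n·d0up·δ_j) ≤ S(x,0) ≤ (1/(n·d0low))(ε1/(δ/K) + (1+ε1)/δ_j)`, and for `x ∈ B`,
`S(x,0) ≤ (1+ε2)(|I|−K)/(n·d0low·(1−δ))`. -/
theorem embedding_norm_initial_bounds_unequal_clusters
    {V : Type*} [Fintype V] [DecidableEq V] [Nonempty V]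
    (B C : Finset V) (hdisj : Disjoint B C) (hunion : B ∪ C = Finset.univ)
    (hBne : B.Nonempty) (hCne : C.Nonempty)
    (K : ℕ) (hK : 0 < K) (Cl : Fin K → Finset V)
    (hClsub : ∀ j, Cl j ⊆ C)
    (hCldisj : ∀ j j', j ≠ j' → Disjoint (Cl j) (Cl j'))
    (hClcover : ∀ x ∈ C, ∃ j, x ∈ Cl j)
    (δ : ℝ) (hδ0 : 0 < δ) (hδ1 : δ < 1)
    (δj : Fin K → ℝ) (hδj : ∀ j, 0 < δj j)
    (hCcard : (C.card : ℝ) = δ * Fintype.card V)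
    (hClcard : ∀ j, ((Cl j).card : ℝ) = δj j * Fintype.card V)
    (hδsum : ∑ j, δj j = δ)
    (W0 : Matrix V V ℝ) (hW0symm : W0.IsSymm)
    (hW0nonneg : ∀ x y, 0 ≤ W0 x y)
    (hW0cross : ∀ x y, ((x ∈ B ∧ y ∈ C) ∨ (x ∈ C ∧ y ∈ B)) → W0 x y = 0)
    (d : V → ℝ) (hd : ∀ x, d x = ∑ y, W0 x y)
    (d0low d0up : ℝ)
    (hd0low : d0low = Finset.univ.inf' Finset.univ_nonempty d)
    (hd0up : d0up = Finset.univ.sup' Finset.univ_nonempty d)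
    (hd0pos : 0 < d0low)
    -- eigendata of P(0) = D(0)⁻¹ W0, indexed by k : V, D(0)-orthonormal
    (lam : V → ℝ) (ψ : V → V → ℝ)
    (heig : ∀ k x, ∑ y, W0 x y * ψ k y = lam k * (d x * ψ k x))
    (horth : ∀ k l, ∑ x, ψ k x * d x * ψ l x = if k = l then 1 else 0)
    (I : Finset V)
    (ε1 ε2 : ℝ) (hε1 : 0 ≤ ε1) (hε1' : ε1 < 1) (hε2 : 0 ≤ ε2)
    -- Assumption A1: K eigenvectors in I supported on C, one per cluster
    (σ : Fin K → V) (hσinj : Function.Injective σ)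
    (hσI : ∀ j, σ j ∈ I)
    (hCsupp : ∀ j, ∀ x ∈ B, ψ (σ j) x = 0)
    (hBsupp : ∀ k ∈ I, k ∉ Finset.univ.image σ → ∀ x ∈ C, ψ k x = 0)
    (hlow : ∀ j, ∀ x ∈ Cl j, (1 - ε1) / (∑ y ∈ Cl j, d y) ≤ (ψ (σ j) x) ^ 2)
    (hup : ∀ j, ∀ x ∈ Cl j, (ψ (σ j) x) ^ 2 ≤ (1 + ε1) / (∑ y ∈ Cl j, d y))
    (hoff : ∀ j, ∀ x ∈ C, x ∉ Cl j → (ψ (σ j) x) ^ 2 ≤ ε1 / (∑ y ∈ C, d y))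
    (hBbound : ∀ k ∈ I, k ∉ Finset.univ.image σ →
      ∀ x ∈ B, (ψ k x) ^ 2 ≤ (1 + ε2) / (∑ y ∈ B, d y)) :
    (∀ j : Fin K, ∀ x ∈ Cl j,
      (1 - ε1) / (Fintype.card V * d0up * δj j) ≤ ∑ k ∈ I, (ψ k x) ^ 2 ∧
      ∑ k ∈ I, (ψ k x) ^ 2
        ≤ (1 / (Fintype.card V * d0low)) * (ε1 / (δ / K) + (1 + ε1) / δj j)) ∧
    (∀ x ∈ B,
      ∑ k ∈ I, (ψ k x) ^ 2
        ≤ (1 + ε2) * ((I.card : ℝ) - K) / (Fintype.card V * d0low * (1 - δ))) := by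
  have hn : (0 : ℝ) < Fintype.card V := by exact_mod_cast Fintype.card_pos
  have hlowd : ∀ x, d0low ≤ d x := fun x => hd0low ▸ inf'_le d (mem_univ x)
  have hupd : ∀ x, d x ≤ d0up := fun x => hd0up ▸ le_sup' d (mem_univ x)
  have hvol_low : ∀ A : Finset V, A.card * d0low ≤ ∑ y ∈ A, d y := fun A => by
    simpa using A.card_nsmul_le_sum d d0low fun y _ => hlowd y
  have hvol_up : ∀ A : Finset V, ∑ y ∈ A, d y ≤ A.card * d0up := fun A => by
    simpa using A.sum_le_card_nsmul d d0up fun y _ => hupd y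
  have himage : univ.image σ ⊆ I := by
    intro k hk
    obtain ⟨j, -, rfl⟩ := mem_image.mp hk
    exact hσI j
  have hsplit : ∀ x, ∑ k ∈ I, (ψ k x) ^ 2
      = ∑ k ∈ I \ univ.image σ, (ψ k x) ^ 2 + ∑ j, (ψ (σ j) x) ^ 2 := fun x => by
    rw [← sum_sdiff himage, sum_image hσinj.injOn]
  refine ⟨fun j x hx => ?_, fun x hx => ?_⟩
  · have hxC := hClsub j hx
    have hClow := hvol_low C
    have hjlow := hvol_low (Cl j)
    have hjup := hvol_up (Cl j)
    rw [hCcard] at hClow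
    rw [hClcard] at hjlow hjup
    have hposj : 0 < δj j * Fintype.card V * d0low := mul_pos (mul_pos (hδj j) hn) hd0pos
    have hposC : 0 < δ * Fintype.card V * d0low := mul_pos (mul_pos hδ0 hn) hd0pos
    have hBzero : ∑ k ∈ I \ univ.image σ, (ψ k x) ^ 2 = 0 := by
      refine sum_eq_zero fun k hk => ?_
      rw [hBsupp k (mem_sdiff.mp hk).1 (mem_sdiff.mp hk).2 x hxC, zero_pow two_ne_zero]
    rw [hsplit, hBzero, zero_add]
    constructor
    · calc (1 - ε1) / (Fintype.card V * d0up * δj j)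
          ≤ (1 - ε1) / (∑ y ∈ Cl j, d y) :=
            div_le_div_of_nonneg_left (by linarith) (by linarith) (by linarith)
        _ ≤ (ψ (σ j) x) ^ 2 := hlow j x hx
        _ ≤ ∑ i, (ψ (σ i) x) ^ 2 :=
            single_le_sum (f := fun i => (ψ (σ i) x) ^ 2) (fun i _ => sq_nonneg _) (mem_univ j)
    · have hoffdiag : ∑ i ∈ univ.erase j, (ψ (σ i) x) ^ 2
          ≤ K * (ε1 / (δ * Fintype.card V * d0low)) := by
        calc ∑ i ∈ univ.erase j, (ψ (σ i) x) ^ 2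
            ≤ ∑ _i ∈ univ.erase j, ε1 / (δ * Fintype.card V * d0low) := by
              refine sum_le_sum fun i hi => ?_
              have hxi : x ∉ Cl i :=
                disjoint_left.mp (hCldisj j i (ne_of_mem_erase hi).symm) hx
              exact (hoff i x hxC hxi).trans (div_le_div_of_nonneg_left hε1 hposC hClow)
          _ ≤ ∑ _i : Fin K, ε1 / (δ * Fintype.card V * d0low) :=
              sum_le_sum_of_subset_of_nonneg (erase_subset _ _)
                fun _ _ _ => div_nonneg hε1 hposC.le
          _ = K * (ε1 / (δ * Fintype.card V * d0low)) := by simp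
      have hdiag : (ψ (σ j) x) ^ 2 ≤ (1 + ε1) / (δj j * Fintype.card V * d0low) :=
        (hup j x hx).trans (div_le_div_of_nonneg_left (by linarith) hposj hjlow)
      rw [← add_sum_erase univ (fun i => (ψ (σ i) x) ^ 2) (mem_univ j)]
      refine (add_le_add hdiag hoffdiag).trans_eq ?_
      have hδj0 := (hδj j).ne'
      field_simp
      ring
  · have hBcard : (B.card : ℝ) = (1 - δ) * Fintype.card V := by
      have h : (B.card : ℝ) + C.card = Fintype.card V := by
        rw [← card_univ, ← hunion, card_union_of_disjoint hdisj, Nat.cast_add]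
      linarith
    have hBlow := hvol_low B
    rw [hBcard] at hBlow
    have hposB : 0 < (1 - δ) * Fintype.card V * d0low :=
      mul_pos (mul_pos (by linarith) hn) hd0pos
    have hCzero : ∑ j, (ψ (σ j) x) ^ 2 = 0 :=
      sum_eq_zero fun j _ => by rw [hCsupp j x hx, zero_pow two_ne_zero]
    have hcard : ((I \ univ.image σ).card : ℝ) = I.card - K := by
      rw [cast_card_sdiff himage, card_image_of_injective _ hσinj, card_univ, Fintype.card_fin]
    rw [hsplit, hCzero, add_zero]
    calc ∑ k ∈ I \ univ.image σ, (ψ k x) ^ 2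
        ≤ (I \ univ.image σ).card • ((1 + ε2) / ((1 - δ) * Fintype.card V * d0low)) := by
          refine sum_le_card_nsmul _ _ _ fun k hk => ?_
          exact (hBbound k (mem_sdiff.mp hk).1 (mem_sdiff.mp hk).2 x hx).trans
            (div_le_div_of_nonneg_left (by linarith) hposB hBlow)
      _ = (1 + ε2) * ((I.card : ℝ) - K) / (Fintype.card V * d0low * (1 - δ)) := by
          rw [nsmul_eq_mul, hcard]
          ring
end
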